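/- The homogeneous linear spaces are exactly: the trivial spaces (all lines have two points), the single lines (all points collinear), the Fano plane PG(2,2), and the projective plane PG(2,3). -/

import Mathlib

open Set Function

universe u v w

/-- A linear space: a set of points with a family of lines, each line having at
least 2 points, such that any two distinct points lie on a common line and any
two distinct lines meet in at most one point. -/
structure LinSpace (X : Type u) where
  lines : Set (Set X)
  two_le : ∀ L ∈ lines, 2 ≤ L.encard
  exists_line : ∀ x y : X, x ≠ y → ∃ L ∈ lines, x ∈ L ∧ y ∈ L
  inter_subsingleton : ∀ L₁ ∈ lines, ∀ L₂ ∈ lines, L₁ ≠ L₂ → (L₁ ∩ L₂).Subsingleton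

/-- Collinearity of three points. -/
def Collin {X : Type u} (A : LinSpace X) (x y z : X) : Prop :=
  ∃ L ∈ A.lines, x ∈ L ∧ y ∈ L ∧ z ∈ L

/-- An embedding of linear spaces: an injection preserving and reflecting collinearity. -/
def IsEmbedding {X : Type u} {Y : Type v} (A : LinSpace X) (B : LinSpace Y) (f : X → Y) : Prop :=
  Function.Injective f ∧ ∀ x y z : X, Collin A x y z ↔ Collin B (f x) (f y) (f z)

/-- The linear space has degree at most `n`: every line has at most `n` points
and every point lies on at most `n` lines. -/
def DegLE {X : Type u} (A : LinSpace X) (n : ℕ) : Prop :=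
  (∀ L ∈ A.lines, L.encard ≤ (n : ℕ∞)) ∧
  ∀ p : X, {L | L ∈ A.lines ∧ p ∈ L}.encard ≤ (n : ℕ∞)

/-- There exist four points, no three of which are collinear. -/
def FourIndep {X : Type u} (A : LinSpace X) : Prop :=
  ∃ a b c d : X, a ≠ b ∧ a ≠ c ∧ a ≠ d ∧ b ≠ c ∧ b ≠ d ∧ c ≠ d ∧
    ∀ p q r : X, p ∈ ({a, b, c, d} : Set X) → q ∈ ({a, b, c, d} : Set X) →
      r ∈ ({a, b, c, d} : Set X) → p ≠ q → p ≠ r → q ≠ r → ¬ Collin A p q r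

/-- A projective plane: every two lines intersect, and there are four points no
three of which are collinear. -/
def IsProjPlane {X : Type u} (A : LinSpace X) : Prop :=
  (∀ L₁ ∈ A.lines, ∀ L₂ ∈ A.lines, (L₁ ∩ L₂).Nonempty) ∧ FourIndep A

/-- An automorphism of a linear space. -/
def IsAuto {X : Type u} (A : LinSpace X) (g : X → X) : Prop :=
  Function.Bijective g ∧ ∀ x y z : X, Collin A x y z ↔ Collin A (g x) (g y) (g z)

/-- A homogeneous linear space: every isomorphism between finite subspaces
extends to an automorphism. -/
def Homogeneous {X : Type u} (A : LinSpace X) : Prop :=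
  ∀ S : Set X, S.Finite → ∀ f : X → X, Set.InjOn f S →
    (∀ x ∈ S, ∀ y ∈ S, ∀ z ∈ S, (Collin A x y z ↔ Collin A (f x) (f y) (f z))) →
    ∃ g : X → X, IsAuto A g ∧ ∀ x ∈ S, g x = f x

/-- The Fano plane: the unique projective plane of order 2 (7 points, every line
has exactly 3 points). -/
def IsFano {X : Type u} (A : LinSpace X) : Prop :=
  IsProjPlane A ∧ (∀ L ∈ A.lines, L.encard = 3) ∧ (Set.univ : Set X).encard = 7

/-- The projective plane over F₃: the unique projective plane of order 3
(13 points, every line has exactly 4 points). -/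
def IsPG2_3 {X : Type u} (A : LinSpace X) : Prop :=
  IsProjPlane A ∧ (∀ L ∈ A.lines, L.encard = 4) ∧ (Set.univ : Set X).encard = 13

/-- The planar closure of a set `S` in a linear space `B`: the closure of `S`
under adding intersection points of pairs of lines spanned by the closure. -/
inductive PlanarCl {Y : Type v} (B : LinSpace Y) (S : Set Y) : Y → Prop
  | base {p : Y} (hp : p ∈ S) : PlanarCl B S p
  | inter {p : Y} (L₁ L₂ : Set Y) (p₁ q₁ p₂ q₂ : Y)
      (hL₁ : L₁ ∈ B.lines) (hL₂ : L₂ ∈ B.lines) (hne : L₁ ≠ L₂)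
      (hpq₁ : p₁ ≠ q₁) (hp₁ : p₁ ∈ L₁) (hq₁ : q₁ ∈ L₁)
      (hpq₂ : p₂ ≠ q₂) (hp₂ : p₂ ∈ L₂) (hq₂ : q₂ ∈ L₂)
      (cp₁ : PlanarCl B S p₁) (cq₁ : PlanarCl B S q₁)
      (cp₂ : PlanarCl B S p₂) (cq₂ : PlanarCl B S q₂)
      (hpL₁ : p ∈ L₁) (hpL₂ : p ∈ L₂) : PlanarCl B S p

/-- A planarisation: an embedding such that every point of the target lies in
the planar closure of the image (i.e. the target is obtained by successively
adding intersection points of pairs of lines). -/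
def IsPlanarisation {X : Type u} {Y : Type v} (A : LinSpace X) (B : LinSpace Y) (f : X → Y) : Prop :=
  IsEmbedding A B f ∧ ∀ y : Y, PlanarCl B (Set.range f) y

/-- An aplanar embedding: any two lines of `A` whose images intersect in `B`
already intersect in `A`. -/
def IsAplanar {X : Type u} {Y : Type v} (A : LinSpace X) (B : LinSpace Y) (f : X → Y) : Prop :=
  IsEmbedding A B f ∧
  ∀ L₁ ∈ A.lines, ∀ L₂ ∈ A.lines, ∀ M₁ ∈ B.lines, ∀ M₂ ∈ B.lines,
    f '' L₁ ⊆ M₁ → f '' L₂ ⊆ M₂ → (M₁ ∩ M₂).Nonempty → (L₁ ∩ L₂).Nonempty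

/-- The induced subspace on the set `S` of points of `B` is a projective plane:
any two induced lines (lines of `B` meeting `S` in at least two points) meet
inside `S`, and `S` contains four points no three collinear. -/
def IsProjPlaneOn {Y : Type v} (B : LinSpace Y) (S : Set Y) : Prop :=
  (∀ L₁ ∈ B.lines, ∀ L₂ ∈ B.lines,
      2 ≤ (L₁ ∩ S).encard → 2 ≤ (L₂ ∩ S).encard → (L₁ ∩ L₂ ∩ S).Nonempty) ∧
  ∃ a b c d : Y, a ∈ S ∧ b ∈ S ∧ c ∈ S ∧ d ∈ S ∧
    a ≠ b ∧ a ≠ c ∧ a ≠ d ∧ b ≠ c ∧ b ≠ d ∧ c ≠ d ∧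
    ∀ p q r : Y, p ∈ ({a, b, c, d} : Set Y) → q ∈ ({a, b, c, d} : Set Y) →
      r ∈ ({a, b, c, d} : Set Y) → p ≠ q → p ≠ r → q ≠ r → ¬ Collin B p q r

namespace LinSpace

variable {X : Type u} {A : LinSpace X}

theorem line_unique {x y : X} {L M : Set X} (h : x ≠ y) (hL : L ∈ A.lines) (hM : M ∈ A.lines)
    (hxL : x ∈ L) (hyL : y ∈ L) (hxM : x ∈ M) (hyM : y ∈ M) : L = M := by
  by_contra hne
  exact h (A.inter_subsingleton L hL M hM hne ⟨hxL, hxM⟩ ⟨hyL, hyM⟩)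

theorem mem_of_collin {x y z : X} {L : Set X} (h : x ≠ y) (hL : L ∈ A.lines)
    (hx : x ∈ L) (hy : y ∈ L) (hc : Collin A x y z) : z ∈ L := by
  obtain ⟨M, hM, hxM, hyM, hzM⟩ := hc
  rwa [line_unique h hL hM hx hy hxM hyM]

theorem _root_.Collin.swap₁₂ {x y z : X} (h : Collin A x y z) : Collin A y x z := by
  obtain ⟨L, hL, h⟩ := h
  exact ⟨L, hL, by tauto⟩

theorem _root_.Collin.swap₂₃ {x y z : X} (h : Collin A x y z) : Collin A x z y := by
  obtain ⟨L, hL, h⟩ := h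
  exact ⟨L, hL, by tauto⟩

theorem _root_.Collin.trans {x y z w : X} (h : x ≠ y) (hz : Collin A x y z)
    (hw : Collin A x y w) : Collin A x z w := by
  obtain ⟨L, hL, hx, hy, hzL⟩ := hz
  exact ⟨L, hL, hx, hzL, mem_of_collin h hL hx hy hw⟩

theorem collin_left {x y : X} (h : x ≠ y) : Collin A x x y := by
  obtain ⟨L, hL, hx, hy⟩ := A.exists_line x y h
  exact ⟨L, hL, hx, hx, hy⟩

theorem collin_self [Nontrivial X] (x y : X) : Collin A x x y := by
  by_cases h : x = y
  · obtain ⟨z, hz⟩ := exists_ne x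
    obtain ⟨L, hL, hx, -⟩ := A.exists_line x z hz.symm
    subst h
    exact ⟨L, hL, hx, hx, hx⟩
  · exact collin_left h

theorem collin_of_eq [Nontrivial X] {x y z : X} (h : x = y ∨ y = z ∨ x = z) :
    Collin A x y z := by
  rcases h with rfl | rfl | rfl
  · exact collin_self _ _
  · exact (collin_self _ _).swap₂₃.swap₁₂
  · exact (collin_self _ _).swap₂₃

theorem exists_pair {L : Set X} (hL : L ∈ A.lines) : ∃ x y, x ≠ y ∧ x ∈ L ∧ y ∈ L := by
  obtain ⟨x, y, hx, hy, h⟩ := Set.one_lt_encard_iff.1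
    (lt_of_lt_of_le (by norm_num) (A.two_le L hL) : 1 < L.encard)
  exact ⟨x, y, h, hx, hy⟩

/-- A partial injection with finite domain extends to a permutation. -/
theorem exists_perm_extends {S : Set X} (hS : S.Finite) {f : X → X} (hf : Set.InjOn f S) :
    ∃ g : Equiv.Perm X, ∀ x ∈ S, g x = f x := by
  classical
  let T : Set X := S ∪ f '' S
  have hT : T.Finite := hS.union (hS.image f)
  have : Finite T := hT
  let φ : S → T := fun x => ⟨f x, Or.inr ⟨x, x.2, rfl⟩⟩
  let ι : S → T := fun x => ⟨x, Or.inl x.2⟩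
  have hφ : Function.Injective φ := fun x y h => Subtype.ext (hf x.2 y.2 (congrArg Subtype.val h))
  have hι : Function.Injective ι := fun x y h => Subtype.ext (congrArg (fun t : T => (t : X)) h)
  let e : {x // x ∈ Set.range ι} ≃ {x // x ∈ Set.range φ} :=
    (Equiv.ofInjective ι hι).symm.trans (Equiv.ofInjective φ hφ)
  refine ⟨Equiv.Perm.ofSubtype e.extendSubtype, fun x hx => ?_⟩
  have hxT : x ∈ T := Or.inl hx
  rw [Equiv.Perm.ofSubtype_apply_of_mem _ hxT,
    Equiv.extendSubtype_apply_of_mem e ⟨x, hxT⟩ ⟨⟨x, hx⟩, rfl⟩]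
  have : (Equiv.ofInjective ι hι).symm ⟨⟨x, hxT⟩, ⟨⟨x, hx⟩, rfl⟩⟩ = ⟨x, hx⟩ := by
    rw [Equiv.symm_apply_eq]; rfl
  simp only [e, Equiv.trans_apply, this]
  rfl

theorem homogeneous_of_perm
    (h : ∀ (g : Equiv.Perm X) (x y z : X), Collin A x y z ↔ Collin A (g x) (g y) (g z)) :
    Homogeneous A := by
  intro S hS f hf _
  obtain ⟨g, hg⟩ := exists_perm_extends hS hf
  exact ⟨g, ⟨g.bijective, h g⟩, hg⟩

theorem homogeneous_of_trivial (h : ∀ L ∈ A.lines, L.encard = 2) : Homogeneous A := by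
  have key : ∀ x y z : X, Collin A x y z ↔ Nontrivial X ∧ (x = y ∨ y = z ∨ x = z) := by
    intro x y z
    constructor
    · rintro ⟨L, hL, hx, hy, hz⟩
      obtain ⟨p, q, hpq, hp, hq⟩ := exists_pair hL
      refine ⟨⟨p, q, hpq⟩, ?_⟩
      obtain ⟨u, v, -, rfl⟩ := Set.encard_eq_two.1 (h L hL)
      simp only [Set.mem_insert_iff, Set.mem_singleton_iff] at hx hy hz
      grind
    · rintro ⟨hX, he⟩
      exact collin_of_eq he
  refine homogeneous_of_perm fun g x y z => ?_
  simp only [key, g.injective.eq_iff]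

theorem homogeneous_of_collin (h : ∀ x y z, Collin A x y z) : Homogeneous A :=
  homogeneous_of_perm fun _ _ _ _ => by simp only [h]

/-! ### Consequences of homogeneity -/

theorem _root_.Homogeneous.exists_auto (H : Homogeneous A) {ι : Type*} [Finite ι] {x y : ι → X}
    (hx : Function.Injective x) (hy : Function.Injective y)
    (h : ∀ i j k, Collin A (x i) (x j) (x k) ↔ Collin A (y i) (y j) (y k)) :
    ∃ g, IsAuto A g ∧ ∀ i, g (x i) = y i := by
  have hf : ∀ i, Function.extend x y id (x i) = y i := fun i => hx.extend_apply _ _ _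
  obtain ⟨g, hg, hgx⟩ := H (Set.range x) (Set.finite_range x) (Function.extend x y id)
    (by
      rintro _ ⟨i, rfl⟩ _ ⟨j, rfl⟩ hij
      rw [hf, hf] at hij
      rw [hy hij])
    (by
      rintro _ ⟨i, rfl⟩ _ ⟨j, rfl⟩ _ ⟨k, rfl⟩
      rw [hf, hf, hf, h])
  exact ⟨g, hg, fun i => by rw [hgx _ ⟨i, rfl⟩, hf]⟩

theorem _root_.Homogeneous.exists_auto_pair [Nontrivial X] (H : Homogeneous A) {x y x' y' : X}
    (h : x ≠ y) (h' : x' ≠ y') : ∃ g, IsAuto A g ∧ g x = x' ∧ g y = y' := by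
  have key : ∀ p q : X, ∀ i j k : Fin 2, Collin A (![p, q] i) (![p, q] j) (![p, q] k) := by
    intro p q i j k
    apply collin_of_eq
    have : i = j ∨ j = k ∨ i = k := by omega
    rcases this with rfl | rfl | rfl <;> simp
  obtain ⟨g, hg, hgx⟩ := H.exists_auto (x := ![x, y]) (y := ![x', y'])
    (by intro i j; fin_cases i <;> fin_cases j <;> simp [h, h.symm])
    (by intro i j; fin_cases i <;> fin_cases j <;> simp [h', h'.symm])
    (fun i j k => by simp only [key])
  exact ⟨g, hg, hgx 0, hgx 1⟩

theorem collin_sumElim_iff [Nontrivial X] {ι κ : Type*} {L M : Set X} (hL : L ∈ A.lines)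
    (hM : M ∈ A.lines) {a : ι → X} {c : κ → X} (ha : Function.Injective a)
    (hc : Function.Injective c) (haL : ∀ i, a i ∈ L \ M) (hcM : ∀ i, c i ∈ M \ L) (i j k : ι ⊕ κ) :
    Collin A (Sum.elim a c i) (Sum.elim a c j) (Sum.elim a c k) ↔
      (i = j ∨ j = k ∨ i = k) ∨ (i.isLeft ∧ j.isLeft ∧ k.isLeft) ∨
        (i.isRight ∧ j.isRight ∧ k.isRight) := by
  have hL2 : ∀ i j k, i ≠ j → ¬ Collin A (a i) (a j) (c k) := fun i j k hij h =>
    (hcM k).2 (mem_of_collin (ha.ne hij) hL (haL i).1 (haL j).1 h)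
  have hM2 : ∀ i j k, i ≠ j → ¬ Collin A (c i) (c j) (a k) := fun i j k hij h =>
    (haL k).2 (mem_of_collin (hc.ne hij) hM (hcM i).1 (hcM j).1 h)
  constructor
  · intro h
    by_contra hne
    push Not at hne
    rcases i with i | i <;> rcases j with j | j <;> rcases k with k | k <;>
      simp at h hne
    · exact hL2 i j k hne h
    · exact hL2 i k j hne h.swap₂₃
    · exact hM2 j k i hne h.swap₁₂.swap₂₃
    · exact hL2 j k i hne h.swap₁₂.swap₂₃
    · exact hM2 i k j hne h.swap₂₃
    · exact hM2 i j k hne h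
  · rintro (h | h | h)
    · exact collin_of_eq (by rcases h with rfl | rfl | rfl <;> simp)
    · rcases i with i | i <;> rcases j with j | j <;> rcases k with k | k <;> simp at h
      exact ⟨L, hL, (haL i).1, (haL j).1, (haL k).1⟩
    · rcases i with i | i <;> rcases j with j | j <;> rcases k with k | k <;> simp at h
      exact ⟨M, hM, (hcM i).1, (hcM j).1, (hcM k).1⟩

/-- Homogeneity for tuples lying on two pairs of lines, away from their intersections. -/
theorem _root_.Homogeneous.exists_auto_two_lines [Nontrivial X] (H : Homogeneous A)
    {ι κ : Type*} [Finite ι] [Finite κ] {L M L' M' : Set X} (hL : L ∈ A.lines)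
    (hM : M ∈ A.lines) (hL' : L' ∈ A.lines) (hM' : M' ∈ A.lines) {a a' : ι → X} {c c' : κ → X}
    (ha : Function.Injective a) (hc : Function.Injective c) (ha' : Function.Injective a')
    (hc' : Function.Injective c')
    (haL : ∀ i, a i ∈ L \ M) (hcM : ∀ i, c i ∈ M \ L)
    (haL' : ∀ i, a' i ∈ L' \ M') (hcM' : ∀ i, c' i ∈ M' \ L') :
    ∃ g, IsAuto A g ∧ (∀ i, g (a i) = a' i) ∧ ∀ i, g (c i) = c' i := by
  obtain ⟨g, hg, h⟩ := H.exists_auto (x := Sum.elim a c) (y := Sum.elim a' c')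
    (ha.sumElim hc fun i j h => (haL i).2 (h ▸ (hcM j).1))
    (ha'.sumElim hc' fun i j h => (haL' i).2 (h ▸ (hcM' j).1))
    (fun i j k => by
      rw [collin_sumElim_iff hL hM ha hc haL hcM, collin_sumElim_iff hL' hM' ha' hc' haL' hcM'])
  exact ⟨g, hg, fun i => h (.inl i), fun i => h (.inr i)⟩


theorem exists_mem_ne {L : Set X} (hL : L ∈ A.lines) (e : X) : ∃ a ∈ L, a ≠ e := by
  obtain ⟨x, y, hxy, hx, hy⟩ := exists_pair hL
  by_cases h : x = e
  · exact ⟨y, hy, fun h' => hxy (h.trans h'.symm)⟩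
  · exact ⟨x, hx, h⟩

theorem exists_two_mem_ne (h3 : ∀ x y : X, x ≠ y → ∃ z, z ≠ x ∧ z ≠ y ∧ Collin A x y z)
    {L : Set X} (hL : L ∈ A.lines) {e : X} (he : e ∈ L) :
    ∃ a ∈ L, ∃ b ∈ L, a ≠ b ∧ a ≠ e ∧ b ≠ e := by
  obtain ⟨a, ha, hae⟩ := exists_mem_ne hL e
  obtain ⟨b, hbe, hba, hb⟩ := h3 e a hae.symm
  exact ⟨a, ha, b, mem_of_collin hae.symm hL he ha hb, hba.symm, hae, hbe⟩

theorem eq_of_mem {L M : Set X} (hL : L ∈ A.lines) (hM : M ∈ A.lines) (h : L ≠ M) {x y : X}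
    (hxL : x ∈ L) (hxM : x ∈ M) (hyL : y ∈ L) (hyM : y ∈ M) : x = y :=
  A.inter_subsingleton L hL M hM h ⟨hxL, hxM⟩ ⟨hyL, hyM⟩

theorem exists_two_lines {x y z : X} (h : ¬ Collin A x y z) (hxy : x ≠ y) (hxz : x ≠ z) :
    ∃ L ∈ A.lines, ∃ M ∈ A.lines, L ≠ M ∧ x ∈ L ∧ x ∈ M ∧ y ∈ L ∧ z ∈ M := by
  obtain ⟨L, hL, hxL, hyL⟩ := A.exists_line x y hxy
  obtain ⟨M, hM, hxM, hzM⟩ := A.exists_line x z hxz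
  exact ⟨L, hL, M, hM, fun hLM => h ⟨L, hL, hxL, hyL, hLM ▸ hzM⟩, hxL, hxM, hyL, hzM⟩

theorem exists_not_collin_ne [Nontrivial X] (h : ∃ x y z, ¬ Collin A x y z) :
    ∃ x y z, ¬ Collin A x y z ∧ x ≠ y ∧ x ≠ z := by
  obtain ⟨x, y, z, h⟩ := h
  exact ⟨x, y, z, h, fun e => h (collin_of_eq (.inl e)), fun e => h (collin_of_eq (.inr (.inr e)))⟩

theorem injective_pair {a b : X} (h : a ≠ b) : Function.Injective ![a, b] := by
  intro i j; fin_cases i <;> fin_cases j <;> simp [h, h.symm]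

theorem injective_triple {a b c : X} (h : a ≠ b) (h' : a ≠ c) (h'' : b ≠ c) :
    Function.Injective ![a, b, c] := by
  intro i j; fin_cases i <;> fin_cases j <;> simp [h, h.symm, h', h'.symm, h'', h''.symm]

theorem _root_.Homogeneous.lines_meet [Nontrivial X] (H : Homogeneous A)
    (h3 : ∀ x y : X, x ≠ y → ∃ z, z ≠ x ∧ z ≠ y ∧ Collin A x y z)
    (hnc : ∃ x y z, ¬ Collin A x y z) :
    ∀ L₁ ∈ A.lines, ∀ L₂ ∈ A.lines, (L₁ ∩ L₂).Nonempty := by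
  obtain ⟨e, u, v, huv, hu, hv⟩ := exists_not_collin_ne hnc
  obtain ⟨L, hL, M, hM, hne, heL, heM, -, -⟩ := exists_two_lines huv hu hv
  obtain ⟨a, ha, b, hb, hab, hae, hbe⟩ := exists_two_mem_ne h3 hL heL
  obtain ⟨c, hc, d, hd, hcd, hce, hde⟩ := exists_two_mem_ne h3 hM heM
  intro L' hL' M' hM'
  by_contra hdis
  rw [Set.not_nonempty_iff_eq_empty] at hdis
  have hdis : ∀ p ∈ L', p ∉ M' := fun p h h' => by
    have : p ∈ L' ∩ M' := ⟨h, h'⟩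
    simp [hdis] at this
  obtain ⟨a', b', hab', ha', hb'⟩ := exists_pair hL'
  obtain ⟨c', d', hcd', hc', hd'⟩ := exists_pair hM'
  have hLM : ∀ p ∈ L, p ≠ e → p ∉ M := fun p hp hpe hpM => hpe (eq_of_mem hL hM hne hp hpM heL heM)
  have hML : ∀ p ∈ M, p ≠ e → p ∉ L := fun p hp hpe hpM => hpe (eq_of_mem hL hM hne hpM hp heL heM)
  obtain ⟨g, hg, hga, hgc⟩ := H.exists_auto_two_lines hL hM hL' hM' (a := ![a, b]) (c := ![c, d])
    (a' := ![a', b']) (c' := ![c', d']) (injective_pair hab) (injective_pair hcd)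
    (injective_pair hab') (injective_pair hcd')
    (by intro i; fin_cases i; exacts [⟨ha, hLM a ha hae⟩, ⟨hb, hLM b hb hbe⟩])
    (by intro i; fin_cases i; exacts [⟨hc, hML c hc hce⟩, ⟨hd, hML d hd hde⟩])
    (by intro i; fin_cases i; exacts [⟨ha', hdis _ ha'⟩, ⟨hb', hdis _ hb'⟩])
    (by intro i; fin_cases i; exacts [⟨hc', fun h => hdis _ h hc'⟩, ⟨hd', fun h => hdis _ h hd'⟩])
  have h1 := hga 0
  have h2 := hga 1
  have h3 := hgc 0
  have h4 := hgc 1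
  simp only [Matrix.cons_val_zero, Matrix.cons_val_one] at h1 h2 h3 h4
  have e1 := (hg.2 a b e).1 ⟨L, hL, ha, hb, heL⟩
  have e2 := (hg.2 c d e).1 ⟨M, hM, hc, hd, heM⟩
  rw [h1, h2] at e1
  rw [h3, h4] at e2
  exact hdis (g e) (mem_of_collin hab' hL' ha' hb' e1) (mem_of_collin hcd' hM' hc' hd' e2)

theorem fourIndep_of_two_lines [Nontrivial X] {L M : Set X} (hL : L ∈ A.lines) (hM : M ∈ A.lines)
    {a b c d : X} (ha : a ∈ L \ M) (hb : b ∈ L \ M) (hc : c ∈ M \ L) (hd : d ∈ M \ L)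
    (hab : a ≠ b) (hcd : c ≠ d) : FourIndep A := by
  have hac : a ≠ c := fun h => hc.2 (h ▸ ha.1)
  have had : a ≠ d := fun h => hd.2 (h ▸ ha.1)
  have hbc : b ≠ c := fun h => hc.2 (h ▸ hb.1)
  have hbd : b ≠ d := fun h => hd.2 (h ▸ hb.1)
  refine ⟨a, b, c, d, hab, hac, had, hbc, hbd, hcd, ?_⟩
  have key := collin_sumElim_iff hL hM (injective_pair hab) (injective_pair hcd)
    (by intro i; fin_cases i; exacts [ha, hb]) (by intro i; fin_cases i; exacts [hc, hd])
  have hcover : ∀ p ∈ ({a, b, c, d} : Set X), ∃ i, Sum.elim ![a, b] ![c, d] i = p := by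
    rintro p (rfl | rfl | rfl | rfl)
    exacts [⟨.inl 0, rfl⟩, ⟨.inl 1, rfl⟩, ⟨.inr 0, rfl⟩, ⟨.inr 1, rfl⟩]
  intro p q r hp hq hr hpq hpr hqr
  obtain ⟨i, rfl⟩ := hcover p hp
  obtain ⟨j, rfl⟩ := hcover q hq
  obtain ⟨k, rfl⟩ := hcover r hr
  rw [key]
  have h1 : i ≠ j := fun h => hpq (by rw [h])
  have h2 : i ≠ k := fun h => hpr (by rw [h])
  have h3 : j ≠ k := fun h => hqr (by rw [h])
  clear key hcover hp hq hr hpq hpr hqr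
  revert i j k
  decide

/-- In a homogeneous plane, the two diagonal points of a quadrangle other than a given vertex
`e = L ∩ M` are collinear with every further point of `L`. -/
theorem _root_.Homogeneous.collin_diagonal [Nontrivial X] (H : Homogeneous A)
    (hmeet : ∀ L₁ ∈ A.lines, ∀ L₂ ∈ A.lines, (L₁ ∩ L₂).Nonempty)
    {L M : Set X} (hL : L ∈ A.lines) (hM : M ∈ A.lines)
    {a₁ a₂ a₃ c₁ c₂ p p' : X} (ha₁ : a₁ ∈ L \ M) (ha₂ : a₂ ∈ L \ M) (ha₃ : a₃ ∈ L \ M)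
    (hc₁ : c₁ ∈ M \ L) (hc₂ : c₂ ∈ M \ L) (h₁₂ : a₁ ≠ a₂) (h₁₃ : a₁ ≠ a₃) (h₂₃ : a₂ ≠ a₃)
    (hc : c₁ ≠ c₂) (hp₁ : Collin A a₁ c₁ p) (hp₂ : Collin A a₂ c₂ p)
    (hp₁' : Collin A a₂ c₁ p') (hp₂' : Collin A a₁ c₂ p') : Collin A p p' a₃ := by
  have hac : ∀ {a c}, a ∈ L \ M → c ∈ M \ L → a ≠ c := fun ha hc h => hc.2 (h ▸ ha.1)
  have hpL : p ∉ L := by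
    intro hpL
    have e1 : p = a₁ := by
      by_contra hne
      exact hc₁.2 (mem_of_collin hne hL hpL ha₁.1 hp₁.swap₂₃.swap₁₂)
    have e2 : p = a₂ := by
      by_contra hne
      exact hc₂.2 (mem_of_collin hne hL hpL ha₂.1 hp₂.swap₂₃.swap₁₂)
    exact h₁₂ (e1.symm.trans e2)
  have hpM : p ∉ M := by
    intro hpM
    have e1 : p = c₁ := by
      by_contra hne
      exact ha₁.2 (mem_of_collin hne hM hpM hc₁.1 hp₁.swap₁₂.swap₂₃.swap₁₂)
    have e2 : p = c₂ := by
      by_contra hne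
      exact ha₂.2 (mem_of_collin hne hM hpM hc₂.1 hp₂.swap₁₂.swap₂₃.swap₁₂)
    exact hc (e1.symm.trans e2)
  have hpa₃ : p ≠ a₃ := fun h => hpL (h ▸ ha₃.1)
  obtain ⟨N, hN, hpN, haN⟩ := A.exists_line p a₃ hpa₃
  obtain ⟨c₃, hcN, hcM⟩ := hmeet N hN M hM
  have hNL : N ≠ L := fun h => hpL (h ▸ hpN)
  have hca₃ : c₃ ≠ a₃ := fun h => ha₃.2 (h ▸ hcM)
  have hcL : c₃ ∉ L := fun h => hNL (line_unique hca₃ hN hL hcN haN h ha₃.1)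
  have hcp : ∀ {a c}, a ∈ L \ M → c ∈ M \ L → a ≠ a₃ → Collin A a c p → c ≠ c₃ := by
    intro a c ha hc haa hcol h
    subst h
    have hpc : p ≠ c := fun h => hpM (h ▸ hcM)
    have : a ∈ N := mem_of_collin hpc hN hpN hcN hcol.swap₁₂.swap₂₃.swap₁₂
    exact hNL (line_unique haa hN hL this haN ha.1 ha₃.1)
  have h1 : c₁ ≠ c₃ := hcp ha₁ hc₁ h₁₃ hp₁
  have h2 : c₂ ≠ c₃ := hcp ha₂ hc₂ h₂₃ hp₂
  obtain ⟨g, hg, hga, hgc⟩ := H.exists_auto_two_lines hL hM hL hM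
    (a := ![a₁, a₂, a₃]) (c := ![c₁, c₂, c₃]) (a' := ![a₂, a₁, a₃]) (c' := ![c₁, c₂, c₃])
    (injective_triple h₁₂ h₁₃ h₂₃) (injective_triple hc h1 h2)
    (injective_triple h₁₂.symm h₂₃ h₁₃) (injective_triple hc h1 h2)
    (by intro i; fin_cases i; exacts [ha₁, ha₂, ha₃])
    (by intro i; fin_cases i; exacts [hc₁, hc₂, ⟨hcM, hcL⟩])
    (by intro i; fin_cases i; exacts [ha₂, ha₁, ha₃])
    (by intro i; fin_cases i; exacts [hc₁, hc₂, ⟨hcM, hcL⟩])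
  have g1 : g a₁ = a₂ := hga 0
  have g2 : g a₂ = a₁ := hga 1
  have g3 : g a₃ = a₃ := hga 2
  have k1 : g c₁ = c₁ := hgc 0
  have k2 : g c₂ = c₂ := hgc 1
  have k3 : g c₃ = c₃ := hgc 2
  have e1 := (hg.2 _ _ _).1 hp₁
  have e2 := (hg.2 _ _ _).1 hp₂
  have e3 := (hg.2 c₃ a₃ p).1 ⟨N, hN, hcN, haN, hpN⟩
  rw [g1, k1] at e1
  rw [g2, k2] at e2
  rw [g3, k3] at e3
  have hgp : g p = p' := by
    obtain ⟨U, hU, hu1, hu2, hu3⟩ := e1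
    obtain ⟨V, hV, hv1, hv2, hv3⟩ := e2
    have hp'U := mem_of_collin (hac ha₂ hc₁) hU hu1 hu2 hp₁'
    have hp'V := mem_of_collin (hac ha₁ hc₂) hV hv1 hv2 hp₂'
    refine eq_of_mem hU hV ?_ hu3 hv3 hp'U hp'V
    rintro rfl
    exact hc₁.2 (line_unique h₁₂ hU hL hv1 hu1 ha₁.1 ha₂.1 ▸ hu2)
  rw [hgp] at e3
  exact ⟨N, hN, hpN, mem_of_collin hca₃ hN hcN haN e3, haN⟩

theorem _root_.Homogeneous.encard_le_four [Nontrivial X] (H : Homogeneous A)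
    (h3 : ∀ x y : X, x ≠ y → ∃ z, z ≠ x ∧ z ≠ y ∧ Collin A x y z)
    (hnc : ∃ x y z, ¬ Collin A x y z)
    {L : Set X} (hL : L ∈ A.lines) : L.encard ≤ 4 := by
  have hmeet := H.lines_meet h3 hnc
  by_contra hlt
  push Not at hlt
  have h5 : (5 : ℕ∞) ≤ L.encard := Order.add_one_le_of_lt hlt
  obtain ⟨T, hTL, hT⟩ := Set.exists_subset_encard_eq h5
  have hTf : T.Finite := Set.finite_of_encard_eq_coe hT
  obtain ⟨e, he⟩ : T.Nonempty := Set.nonempty_of_encard_ne_zero (by rw [hT]; norm_num)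
  have hT4 : (T \ {e}).encard = 4 := by
    have := Set.encard_sdiff_singleton_add_one he
    rw [hT] at this
    exact WithTop.add_right_cancel (by simp : (1 : ℕ∞) ≠ ⊤) (this.trans (by rfl))
  obtain ⟨a₁, a₂, a₃, a₄, h₁₂, h₁₃, h₁₄, h₂₃, h₂₄, h₃₄, hTe⟩ := Set.encard_eq_four.1 hT4
  have hmem : ∀ x ∈ ({a₁, a₂, a₃, a₄} : Set X), x ∈ L ∧ x ≠ e := by
    rw [← hTe]
    exact fun x hx => ⟨hTL hx.1, hx.2⟩
  have heL := hTL he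
  obtain ⟨M, hM, hLM, heM⟩ : ∃ M ∈ A.lines, L ≠ M ∧ e ∈ M := by
    by_contra hcon
    push Not at hcon
    obtain ⟨x, y, z, h⟩ := hnc
    have hall : ∀ x, x ∈ L := by
      intro x
      by_cases hx : x = e
      · exact hx ▸ heL
      · obtain ⟨M, hM, hxM, heM⟩ := A.exists_line x e hx
        by_contra hxL
        exact hcon M hM (fun h => hxL (h ▸ hxM)) heM
    exact h ⟨L, hL, hall x, hall y, hall z⟩
  obtain ⟨c₁, hc₁, c₂, hc₂, hc, hc₁e, hc₂e⟩ := exists_two_mem_ne h3 hM heM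
  have hLM' : ∀ x ∈ ({a₁, a₂, a₃, a₄} : Set X), x ∈ L \ M := fun x hx =>
    ⟨(hmem x hx).1, fun h => (hmem x hx).2 (eq_of_mem hL hM hLM (hmem x hx).1 h heL heM)⟩
  have hML : ∀ x ∈ M, x ≠ e → x ∈ M \ L := fun x hx hxe =>
    ⟨hx, fun h => hxe (eq_of_mem hL hM hLM h hx heL heM)⟩
  have ha₁ := hLM' a₁ (by simp)
  have ha₂ := hLM' a₂ (by simp)
  have ha₃ := hLM' a₃ (by simp)
  have ha₄ := hLM' a₄ (by simp)
  have hc₁' := hML c₁ hc₁ hc₁e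
  have hc₂' := hML c₂ hc₂ hc₂e
  have hac : ∀ {a c}, a ∈ L \ M → c ∈ M \ L → a ≠ c := fun ha hc h => hc.2 (h ▸ ha.1)
  obtain ⟨N₁₁, hN₁₁, a1, a2⟩ := A.exists_line a₁ c₁ (hac ha₁ hc₁')
  obtain ⟨N₂₂, hN₂₂, a3, a4⟩ := A.exists_line a₂ c₂ (hac ha₂ hc₂')
  obtain ⟨N₂₁, hN₂₁, a5, a6⟩ := A.exists_line a₂ c₁ (hac ha₂ hc₁')
  obtain ⟨N₁₂, hN₁₂, a7, a8⟩ := A.exists_line a₁ c₂ (hac ha₁ hc₂')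
  obtain ⟨p, hp1, hp2⟩ := hmeet _ hN₁₁ _ hN₂₂
  obtain ⟨p', hp1', hp2'⟩ := hmeet _ hN₂₁ _ hN₁₂
  have key : ∀ {a}, a ∈ L \ M → a₁ ≠ a → a₂ ≠ a → Collin A p p' a := fun ha h h' =>
    H.collin_diagonal hmeet hL hM ha₁ ha₂ ha hc₁' hc₂' h₁₂ h h' hc ⟨_, hN₁₁, a1, a2, hp1⟩
      ⟨_, hN₂₂, a3, a4, hp2⟩ ⟨_, hN₂₁, a5, a6, hp1'⟩ ⟨_, hN₁₂, a7, a8, hp2'⟩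
  have hne₁ : N₁₁ ≠ L := fun h => hc₁'.2 (h ▸ a2)
  have hne₂ : N₂₂ ≠ L := fun h => hc₂'.2 (h ▸ a4)
  have hpL : p ∉ L := fun hp =>
    h₁₂ ((eq_of_mem hN₁₁ hL hne₁ a1 ha₁.1 hp1 hp).trans
      (eq_of_mem hN₂₂ hL hne₂ hp2 hp a3 ha₂.1))
  have hpp' : p ≠ p' := by
    rintro rfl
    have hN : N₁₁ ≠ N₁₂ := fun h =>
      ha₁.2 (line_unique hc hN₁₁ hM a2 (h ▸ a8) hc₁ hc₂ ▸ a1)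
    exact hpL (eq_of_mem hN₁₁ hN₁₂ hN a1 a7 hp1 hp2' ▸ ha₁.1)
  have hcol : Collin A a₃ a₄ p := by
    have := (key ha₃ h₁₃ h₂₃).trans hpp' (key ha₄ h₁₄ h₂₄)
    exact this.swap₁₂.swap₂₃
  exact hpL (mem_of_collin h₃₄ hL ha₃.1 ha₄.1 hcol)

theorem _root_.Homogeneous.encard_le_encard [Nontrivial X] (H : Homogeneous A) {L M : Set X}
    (hL : L ∈ A.lines) (hM : M ∈ A.lines) : L.encard ≤ M.encard := by
  obtain ⟨x, y, hxy, hx, hy⟩ := exists_pair hL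
  obtain ⟨x', y', hxy', hx', hy'⟩ := exists_pair hM
  obtain ⟨g, hg, rfl, rfl⟩ := H.exists_auto_pair hxy hxy'
  rw [← hg.1.injective.encard_image]
  refine Set.encard_le_encard ?_
  rintro _ ⟨z, hz, rfl⟩
  exact mem_of_collin hxy' hM hx' hy' ((hg.2 x y z).1 ⟨L, hL, hx, hy, hz⟩)

/-! ### Counting the points of a finite projective plane -/

instance : Membership X A.lines := ⟨fun L x => x ∈ L.1⟩

theorem FourIndep.exists_not_collin {A : LinSpace X} (h : FourIndep A) :
    ∃ a b c d : X, a ≠ b ∧ a ≠ c ∧ a ≠ d ∧ b ≠ c ∧ b ≠ d ∧ c ≠ d ∧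
      ¬ Collin A a b c ∧ ¬ Collin A a b d ∧ ¬ Collin A a c d ∧ ¬ Collin A b c d := by
  obtain ⟨a, b, c, d, hab, hac, had, hbc, hbd, hcd, h⟩ := h
  refine ⟨a, b, c, d, hab, hac, had, hbc, hbd, hcd, ?_, ?_, ?_, ?_⟩ <;>
    apply h <;> first | assumption | simp

theorem exists_not_mem_of_mem (h : FourIndep A) (L : Set X) (hL : L ∈ A.lines) :
    ∃ p, p ∉ L := by
  obtain ⟨a, b, c, d, -, -, -, -, -, -, h, -⟩ := FourIndep.exists_not_collin h
  by_contra hcon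
  push Not at hcon
  exact h ⟨L, hL, hcon a, hcon b, hcon c⟩

/-- A projective plane in the sense of `IsProjPlane` is one in the sense of Mathlib. -/
@[reducible] noncomputable def projectivePlane (h : IsProjPlane A) :
    Configuration.ProjectivePlane X A.lines where
  exists_point L := exists_not_mem_of_mem h.2 L.1 L.2
  exists_line p := by
    obtain ⟨a, b, c, d, hab, hac, had, hbc, hbd, hcd, h₁, -⟩ := FourIndep.exists_not_collin h.2
    obtain ⟨L, hL, haL, hbL⟩ := A.exists_line a b hab
    obtain ⟨M, hM, haM, hcM⟩ := A.exists_line a c hac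
    obtain ⟨N, hN, hbN, hcN⟩ := A.exists_line b c hbc
    by_contra hcon
    push Not at hcon
    have h1 : p ∈ L := hcon ⟨L, hL⟩
    have h2 : p ∈ M := hcon ⟨M, hM⟩
    have h3 : p ∈ N := hcon ⟨N, hN⟩
    have hLM : L ≠ M := fun e => h₁ ⟨L, hL, haL, hbL, e ▸ hcM⟩
    have hLN : L ≠ N := fun e => h₁ ⟨L, hL, haL, hbL, e ▸ hcN⟩
    exact hab ((eq_of_mem hL hM hLM haL haM h1 h2).trans (eq_of_mem hL hN hLN h1 h3 hbL hbN))
  eq_or_eq {p₁ p₂ l₁ l₂} h1 h2 h3 h4 := by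
    by_contra hcon
    push Not at hcon
    exact hcon.2 (Subtype.ext (line_unique hcon.1 l₁.2 l₂.2 h1 h2 h3 h4))
  mkPoint {L M} _ := (h.1 L.1 L.2 M.1 M.2).some
  mkPoint_ax {L M} _ := (h.1 L.1 L.2 M.1 M.2).some_mem
  mkLine {x y} hxy := ⟨(A.exists_line x y hxy).choose, (A.exists_line x y hxy).choose_spec.1⟩
  mkLine_ax {x y} hxy := (A.exists_line x y hxy).choose_spec.2
  exists_config := by
    obtain ⟨a, b, c, d, hab, hac, had, hbc, hbd, hcd, h₁, h₂, h₃, h₄⟩ :=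
      FourIndep.exists_not_collin h.2
    obtain ⟨L, hL, haL, hbL⟩ := A.exists_line a b hab
    obtain ⟨M, hM, haM, hcM⟩ := A.exists_line a c hac
    obtain ⟨N, hN, hcN, hdN⟩ := A.exists_line c d hcd
    exact ⟨d, a, b, ⟨N, hN⟩, ⟨L, hL⟩, ⟨M, hM⟩,
      fun e => h₂ ⟨L, hL, haL, hbL, e⟩, fun e => h₃ ⟨M, hM, haM, hcM, e⟩,
      fun e => h₃ ⟨N, hN, e, hcN, hdN⟩, haL, haM, fun e => h₄ ⟨N, hN, e, hcN, hdN⟩, hbL,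
      fun e => h₁ ⟨M, hM, haM, e, hcM⟩⟩

theorem finite_of_lines_finite (h : IsProjPlane A) (hfin : ∀ L ∈ A.lines, L.Finite) :
    Finite X := by
  obtain ⟨a, b, c, d, hab, hac, had, hbc, hbd, hcd, h₁, -⟩ := FourIndep.exists_not_collin h.2
  obtain ⟨L, hL, haL, hbL⟩ := A.exists_line a b hab
  have hline : ∀ x ∈ L, ∃ M ∈ A.lines, x ∈ M ∧ c ∈ M := fun x hx =>
    A.exists_line x c (fun e => h₁ ⟨L, hL, haL, hbL, e ▸ hx⟩)
  choose! ℓ hℓ hxℓ hcℓ using hline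
  have hfin' : (⋃ x ∈ L, ℓ x).Finite := (hfin L hL).biUnion fun x hx => hfin _ (hℓ x hx)
  refine Set.finite_univ_iff.1 (hfin'.subset fun y _ => ?_)
  by_cases hyc : y = c
  · exact Set.mem_biUnion haL (hyc ▸ hcℓ a haL)
  · obtain ⟨N, hN, hyN, hcN⟩ := A.exists_line y c hyc
    obtain ⟨x, hxL, hxN⟩ := h.1 L hL N hN
    have hxc : x ≠ c := fun e => h₁ ⟨L, hL, haL, hbL, e ▸ hxL⟩
    rw [line_unique hxc hN (hℓ x hxL) hxN hcN (hxℓ x hxL) (hcℓ x hxL)] at hyN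
    exact Set.mem_biUnion hxL hyN

theorem encard_univ (h : IsProjPlane A) {n : ℕ}
    (hn : ∀ L ∈ A.lines, L.encard = (n + 1 : ℕ)) :
    (Set.univ : Set X).encard = (n ^ 2 + n + 1 : ℕ) := by
  have := finite_of_lines_finite h fun L hL => Set.finite_of_encard_eq_coe (hn L hL)
  have := Fintype.ofFinite X
  let _ := projectivePlane h
  obtain ⟨a, b, -, -, hab, -⟩ := h.2
  obtain ⟨L, hL, -⟩ := A.exists_line a b hab
  have h1 := Configuration.ProjectivePlane.pointCount_eq X (⟨L, hL⟩ : A.lines)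
  have h2 : Configuration.pointCount X (⟨L, hL⟩ : A.lines) = n + 1 := by
    change Nat.card L = n + 1
    rw [Nat.card_coe_set_eq, Set.ncard, hn L hL]
    rfl
  have h3 : Configuration.ProjectivePlane.order X A.lines = n :=
    Nat.add_right_cancel (h1.symm.trans h2)
  rw [Set.encard_univ, ENat.card_eq_coe_fintype_card,
    Configuration.ProjectivePlane.card_points X A.lines, h3]

theorem classification_of_homogeneous (H : Homogeneous A) :
    (∀ L ∈ A.lines, L.encard = 2) ∨ (∀ x y z : X, Collin A x y z) ∨ IsFano A ∨ IsPG2_3 A := by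
  rw [or_iff_not_imp_left, or_iff_not_imp_left]
  intro htriv hnc
  push Not at htriv hnc
  obtain ⟨L₀, hL₀, hcard⟩ := htriv
  obtain ⟨p, q, hpq, hp, hq⟩ := exists_pair hL₀
  have : Nontrivial X := ⟨p, q, hpq⟩
  have hL₀3 : 3 ≤ L₀.encard :=
    Order.add_one_le_of_lt (lt_of_le_of_ne (A.two_le L₀ hL₀) hcard.symm)
  have hge : ∀ L ∈ A.lines, 3 ≤ L.encard := fun L hL =>
    hL₀3.trans (H.encard_le_encard hL₀ hL)
  have h3 : ∀ x y : X, x ≠ y → ∃ z, z ≠ x ∧ z ≠ y ∧ Collin A x y z := by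
    intro x y hxy
    obtain ⟨L, hL, hx, hy⟩ := A.exists_line x y hxy
    by_contra! hcon
    have hsub : L ⊆ {x, y} := fun z hz => by
      by_contra hz'
      simp only [Set.mem_insert_iff, Set.mem_singleton_iff, not_or] at hz'
      exact hcon z hz'.1 hz'.2 ⟨L, hL, hx, hy, hz⟩
    have := (hge L hL).trans ((Set.encard_le_encard hsub).trans (Set.encard_pair hxy).le)
    exact absurd this (by norm_num)
  have hle : ∀ L ∈ A.lines, L.encard ≤ 4 := fun L hL => H.encard_le_four h3 hnc hL
  have hmeet := H.lines_meet h3 hnc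
  have hproj : IsProjPlane A := by
    refine ⟨hmeet, ?_⟩
    obtain ⟨e, u, v, huv, hu, hv⟩ := exists_not_collin_ne hnc
    obtain ⟨L, hL, M, hM, hne, heL, heM, -, -⟩ := exists_two_lines huv hu hv
    obtain ⟨a, ha, b, hb, hab, hae, hbe⟩ := exists_two_mem_ne h3 hL heL
    obtain ⟨c, hc, d, hd, hcd, hce, hde⟩ := exists_two_mem_ne h3 hM heM
    have hLM : ∀ p ∈ L, p ≠ e → p ∈ L \ M := fun p hp hpe =>
      ⟨hp, fun hpM => hpe (eq_of_mem hL hM hne hp hpM heL heM)⟩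
    have hML : ∀ p ∈ M, p ≠ e → p ∈ M \ L := fun p hp hpe =>
      ⟨hp, fun hpM => hpe (eq_of_mem hL hM hne hpM hp heL heM)⟩
    exact fourIndep_of_two_lines hL hM (hLM a ha hae) (hLM b hb hbe) (hML c hc hce)
      (hML d hd hde) hab hcd
  by_cases h4 : L₀.encard = 4
  · right
    have hall : ∀ L ∈ A.lines, L.encard = 4 := fun L hL =>
      le_antisymm (hle L hL) (h4 ▸ H.encard_le_encard hL₀ hL)
    exact ⟨hproj, hall, encard_univ (n := 3) hproj hall⟩
  · left
    have h₃ : L₀.encard ≤ 3 := Order.le_of_lt_add_one (lt_of_le_of_ne (hle L₀ hL₀) h4)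
    have hall : ∀ L ∈ A.lines, L.encard = 3 := fun L hL =>
      le_antisymm ((H.encard_le_encard hL hL₀).trans h₃) (hge L hL)
    exact ⟨hproj, hall, encard_univ (n := 2) hproj hall⟩

/-! ### Coordinates for the planes of order two and three -/

theorem eq_or_line_eq {L M : Set X} (hL : L ∈ A.lines) (hM : M ∈ A.lines) (x y : X)
    (hxL : x ∈ L) (hxM : x ∈ M) (hyL : y ∈ L) (hyM : y ∈ M) : x = y ∨ L = M := by
  by_contra! h
  exact h.1 (eq_of_mem hL hM h.2 hxL hxM hyL hyM)

theorem tangent {AC AD BC BD AB : Set X} {a b c d f g u v : X}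
    (hmeet : ∀ L₁ ∈ A.lines, ∀ L₂ ∈ A.lines, (L₁ ∩ L₂).Nonempty)
    (hAB : AB ∈ A.lines) (hAC : AC ∈ A.lines) (hAD : AD ∈ A.lines)
    (hBC : BC ∈ A.lines) (hBD : BD ∈ A.lines)
    (h1 : a ∈ AB) (h2 : b ∈ AB) (h3 : a ∈ AC) (h4 : c ∈ AC) (h5 : a ∈ AD) (h6 : d ∈ AD)
    (h7 : b ∈ BC) (h8 : c ∈ BC) (h9 : b ∈ BD) (h10 : d ∈ BD) (n1 : a ∉ BC) (n2 : a ∉ BD)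
    (hg : g ∈ AD) (hg' : g ∈ BC) (hf : f ∈ AC) (hf' : f ∈ BD)
    (hu : u ∈ BC) (hub : u ≠ b) (huc : u ≠ c) (hug : u ≠ g)
    (hv : ∀ y ∈ BD, y = b ∨ y = d ∨ y = f ∨ y = v) :
    ∃ L ∈ A.lines, a ∈ L ∧ u ∈ L ∧ v ∈ L := by
  obtain ⟨L, hL, haL, huL⟩ := A.exists_line a u (by rintro rfl; exact n1 hu)
  obtain ⟨z, hzL, hz⟩ := hmeet L hL BD hBD
  refine ⟨L, hL, haL, huL, ?_⟩
  have e1 := eq_or_line_eq hL hAB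
  have e2 := eq_or_line_eq hL hAC
  have e3 := eq_or_line_eq hL hAD
  have f1 := eq_or_line_eq hBC hAB
  have f2 := eq_or_line_eq hBC hAC
  have f3 := eq_or_line_eq hBC hAD
  rcases hv z hz with rfl | rfl | rfl | rfl
  · grind
  · grind
  · grind
  · exact hzL

theorem diagonal {AB AC BC BD CD M : Set X} {a b c d e f g u : X}
    (hmeet : ∀ L₁ ∈ A.lines, ∀ L₂ ∈ A.lines, (L₁ ∩ L₂).Nonempty)
    (hAB : AB ∈ A.lines) (hAC : AC ∈ A.lines) (hBC : BC ∈ A.lines) (hBD : BD ∈ A.lines)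
    (hCD : CD ∈ A.lines) (hM : M ∈ A.lines)
    (h1 : a ∈ AB) (h2 : b ∈ AB) (h3 : a ∈ AC) (h4 : c ∈ AC)
    (h9 : b ∈ BD) (h10 : d ∈ BD) (h11 : c ∈ CD) (h12 : d ∈ CD)
    (n2 : a ∉ BD) (n3 : d ∉ AB) (n4 : c ∉ AB) (n5 : a ∉ CD) (n6 : c ∉ BD)
    (he : e ∈ AB) (he' : e ∈ CD) (hf : f ∈ AC) (hf' : f ∈ BD) (heM : e ∈ M) (hfM : f ∈ M)
    (hgM : g ∉ M) (hu : ∀ y ∈ BC, y = b ∨ y = c ∨ y = g ∨ y = u) : u ∈ M := by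
  obtain ⟨z, hzM, hz⟩ := hmeet M hM BC hBC
  have e1 := eq_or_line_eq hM hAB
  have e2 := eq_or_line_eq hM hAC
  have e3 := eq_or_line_eq hM hBD
  have e4 := eq_or_line_eq hM hCD
  have f1 := eq_or_line_eq hAB hCD
  have f2 := eq_or_line_eq hAC hBD
  have f3 := eq_or_line_eq hBD hCD
  have f4 := eq_or_line_eq hAB hAC
  rcases hu z hz with rfl | rfl | rfl | rfl
  · grind
  · grind
  · grind
  · exact hzM

theorem exists_fourth {L : Set X} (hL : L.encard = 4) {a b e : X} (ha : a ∈ L) (hb : b ∈ L)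
    (he : e ∈ L) (hab : a ≠ b) (hea : e ≠ a) (heb : e ≠ b) :
    ∃ w ∈ L, w ≠ a ∧ w ≠ b ∧ w ≠ e ∧ ∀ y ∈ L, y = a ∨ y = b ∨ y = e ∨ y = w := by
  obtain ⟨p, q, r, s, hpq, hpr, hps, hqr, hqs, hrs, rfl⟩ := Set.encard_eq_four.1 hL
  clear hL
  simp only [Set.mem_insert_iff, Set.mem_singleton_iff] at *
  have : (p ≠ a ∧ p ≠ b ∧ p ≠ e) ∨ (q ≠ a ∧ q ≠ b ∧ q ≠ e) ∨ (r ≠ a ∧ r ≠ b ∧ r ≠ e) ∨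
      (s ≠ a ∧ s ≠ b ∧ s ≠ e) := by grind
  rcases this with h | h | h | h
  · exact ⟨p, by grind⟩
  · exact ⟨q, by grind⟩
  · exact ⟨r, by grind⟩
  · exact ⟨s, by grind⟩

theorem exists_third {L : Set X} (hL : L.encard = 3) {a b e : X} (ha : a ∈ L) (hb : b ∈ L)
    (he : e ∈ L) (hab : a ≠ b) (hea : e ≠ a) (heb : e ≠ b) :
    ∀ y ∈ L, y = a ∨ y = b ∨ y = e := by
  obtain ⟨p, q, r, hpq, hpr, hqr, rfl⟩ := Set.encard_eq_three.1 hL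
  clear hL
  simp only [Set.mem_insert_iff, Set.mem_singleton_iff] at *
  grind

/-- A surjective labelling of the points by `Fin N` that is compatible with a combinatorial model
of the lines determines collinearity. -/
theorem collin_iff_of_model {N k : ℕ} {φ : Fin N → X} {pts : Fin N → Finset (Fin N)}
    (hk : ∀ L ∈ A.lines, L.encard = k) (huniv : (Set.univ : Set X).encard = N)
    (hsurj : Function.Surjective φ) (hpts : ∀ l, (pts l).card = k)
    (hcover : ∀ i j, ∃ l, i ∈ pts l ∧ j ∈ pts l)
    (hℓ : ∀ l, ∃ L ∈ A.lines, ∀ i ∈ pts l, φ i ∈ L) :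
    Function.Bijective φ ∧
      ∀ i j m, Collin A (φ i) (φ j) (φ m) ↔ ∃ l, i ∈ pts l ∧ j ∈ pts l ∧ m ∈ pts l := by
  have hfin : Finite X := Finite.of_surjective φ hsurj
  have := Fintype.ofFinite X
  rw [Set.encard_univ, ENat.card_eq_coe_fintype_card, Nat.cast_inj] at huniv
  have hbij : Function.Bijective φ :=
    (Fintype.bijective_iff_surjective_and_card φ).2 ⟨hsurj, by simp [huniv]⟩
  refine ⟨hbij, fun i j m => ⟨fun h => ?_, fun ⟨l, hi, hj, hm⟩ => ?_⟩⟩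
  · by_cases hij : i = j
    · obtain ⟨l, h1, h2⟩ := hcover i m
      exact ⟨l, h1, hij ▸ h1, h2⟩
    obtain ⟨l, h1, h2⟩ := hcover i j
    obtain ⟨L, hL, hφ⟩ := hℓ l
    have hLeq : φ '' (pts l : Set (Fin N)) = L := by
      refine (Set.toFinite _).eq_of_subset_of_encard_le ?_ ?_
      · rintro _ ⟨i, hi, rfl⟩
        exact hφ i hi
      · rw [hk L hL, hbij.1.encard_image, Set.encard_coe_eq_coe_finsetCard, hpts]
    have hmL := mem_of_collin (hbij.1.ne hij) hL (hφ i h1) (hφ j h2) h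
    rw [← hLeq, hbij.1.mem_set_image] at hmL
    exact ⟨l, h1, h2, hmL⟩
  · obtain ⟨L, hL, hφ⟩ := hℓ l
    exact ⟨L, hL, hφ i hi, hφ j hj, hφ m hm⟩

/-- An ordered quadrangle: four points, no three of which are collinear. -/
structure IsFrame (A : LinSpace X) (a b c d : X) : Prop where
  ab : a ≠ b
  ac : a ≠ c
  ad : a ≠ d
  bc : b ≠ c
  bd : b ≠ d
  cd : c ≠ d
  abc : ¬ Collin A a b c
  abd : ¬ Collin A a b d
  acd : ¬ Collin A a c d
  bcd : ¬ Collin A b c d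

/-- Point sets of the lines of the projective plane of order two; the first four points form a
quadrangle. -/
def ptsTwo : Fin 7 → Finset (Fin 7) :=
  ![{0, 1, 4}, {0, 2, 5}, {0, 3, 6}, {1, 2, 6}, {1, 3, 5}, {2, 3, 4}, {4, 5, 6}]

/-- Point sets of the lines of the projective plane of order three; the first four points form a
quadrangle. -/
def ptsThree : Fin 13 → Finset (Fin 13) :=
  ![{0, 1, 4, 7}, {0, 2, 5, 8}, {0, 3, 6, 9}, {1, 2, 6, 10}, {1, 3, 5, 11}, {2, 3, 4, 12},
    {0, 10, 11, 12}, {1, 8, 9, 12}, {2, 7, 9, 11}, {3, 7, 8, 10}, {4, 5, 9, 10}, {4, 6, 8, 11},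
    {5, 6, 7, 12}]

/-- The model `pts` describes `A` with respect to any quadrangle. -/
def HasModel (A : LinSpace X) {N : ℕ} [NeZero N] (pts : Fin N → Finset (Fin N)) : Prop :=
  ∀ a b c d : X, IsFrame A a b c d → ∃ φ : Fin N → X, Function.Bijective φ ∧
    (∀ i j m, Collin A (φ i) (φ j) (φ m) ↔ ∃ l, i ∈ pts l ∧ j ∈ pts l ∧ m ∈ pts l) ∧
    φ 0 = a ∧ φ 1 = b ∧ φ 2 = c ∧ φ 3 = d

theorem hasModel_ptsTwo (h : IsFano A) : HasModel A ptsTwo := by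
  obtain ⟨⟨hmeet, -⟩, h3, huniv⟩ := h
  intro a b c d hF
  obtain ⟨AB, hAB, aAB, bAB⟩ := A.exists_line a b hF.ab
  obtain ⟨AC, hAC, aAC, cAC⟩ := A.exists_line a c hF.ac
  obtain ⟨AD, hAD, aAD, dAD⟩ := A.exists_line a d hF.ad
  obtain ⟨BC, hBC, bBC, cBC⟩ := A.exists_line b c hF.bc
  obtain ⟨BD, hBD, bBD, dBD⟩ := A.exists_line b d hF.bd
  obtain ⟨CD, hCD, cCD, dCD⟩ := A.exists_line c d hF.cd
  have cAB : c ∉ AB := fun h => hF.abc ⟨AB, hAB, aAB, bAB, h⟩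
  have dAB : d ∉ AB := fun h => hF.abd ⟨AB, hAB, aAB, bAB, h⟩
  have bAC : b ∉ AC := fun h => hF.abc ⟨AC, hAC, aAC, h, cAC⟩
  have dAC : d ∉ AC := fun h => hF.acd ⟨AC, hAC, aAC, cAC, h⟩
  have bAD : b ∉ AD := fun h => hF.abd ⟨AD, hAD, aAD, h, dAD⟩
  have cAD : c ∉ AD := fun h => hF.acd ⟨AD, hAD, aAD, h, dAD⟩
  have aBC : a ∉ BC := fun h => hF.abc ⟨BC, hBC, h, bBC, cBC⟩
  have dBC : d ∉ BC := fun h => hF.bcd ⟨BC, hBC, bBC, cBC, h⟩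
  have aBD : a ∉ BD := fun h => hF.abd ⟨BD, hBD, h, bBD, dBD⟩
  have cBD : c ∉ BD := fun h => hF.bcd ⟨BD, hBD, bBD, h, dBD⟩
  have aCD : a ∉ CD := fun h => hF.acd ⟨CD, hCD, h, cCD, dCD⟩
  have bCD : b ∉ CD := fun h => hF.bcd ⟨CD, hCD, h, cCD, dCD⟩
  obtain ⟨e, eAB, eCD⟩ := hmeet AB hAB CD hCD
  obtain ⟨f, fAC, fBD⟩ := hmeet AC hAC BD hBD
  obtain ⟨g, gAD, gBC⟩ := hmeet AD hAD BC hBC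
  have hea : e ≠ a := fun h => aCD (h ▸ eCD)
  have heb : e ≠ b := fun h => bCD (h ▸ eCD)
  have hfa : f ≠ a := fun h => aBD (h ▸ fBD)
  have hfc : f ≠ c := fun h => cBD (h ▸ fBD)
  have hga : g ≠ a := fun h => aBC (h ▸ gBC)
  have hgd : g ≠ d := fun h => dBC (h ▸ gBC)
  have hgb : g ≠ b := fun h => bAD (h ▸ gAD)
  have hgc : g ≠ c := fun h => cAD (h ▸ gAD)
  have sAB := exists_third (h3 AB hAB) aAB bAB eAB hF.ab hea heb
  have sAC := exists_third (h3 AC hAC) aAC cAC fAC hF.ac hfa hfc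
  have sAD := exists_third (h3 AD hAD) aAD dAD gAD hF.ad hga hgd
  have sBC := exists_third (h3 BC hBC) bBC cBC gBC hF.bc hgb hgc
  have hef : e ≠ f := fun h => hea
    (eq_of_mem hAB hAC (fun h => bAC (h ▸ bAB)) eAB (h ▸ fAC) aAB aAC)
  obtain ⟨EF, hEF, eEF, fEF⟩ := A.exists_line e f hef
  have gEF : g ∈ EF := by
    obtain ⟨z, hz, hzBC⟩ := hmeet EF hEF BC hBC
    have e1 := eq_or_line_eq hEF hAB
    have e2 := eq_or_line_eq hEF hAC
    rcases sBC z hzBC with rfl | rfl | rfl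
    · grind
    · grind
    · exact hz
  refine ⟨![a, b, c, d, e, f, g], ?_⟩
  rw [← and_assoc]
  refine ⟨collin_iff_of_model (k := 3) h3 huniv ?_ (by decide) (by decide) ?_, rfl, rfl, rfl, rfl⟩
  · intro y
    by_cases hya : y = a
    · exact ⟨0, hya.symm⟩
    obtain ⟨N, hN, yN, aN⟩ := A.exists_line y a hya
    obtain ⟨z, zN, hz⟩ := hmeet N hN BC hBC
    have e1 := eq_or_line_eq hN hAB
    have e2 := eq_or_line_eq hN hAC
    have e3 := eq_or_line_eq hN hAD
    have hy : y = a ∨ y = b ∨ y = c ∨ y = d ∨ y = e ∨ y = f ∨ y = g := by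
      rcases sBC z hz with rfl | rfl | rfl
      · obtain rfl : N = AB := (e1 a z aN aAB zN bAB).resolve_left hF.ab
        grind
      · obtain rfl : N = AC := (e2 a z aN aAC zN cAC).resolve_left hF.ac
        grind
      · obtain rfl : N = AD := (e3 a z aN aAD zN gAD).resolve_left hga.symm
        grind
    rcases hy with rfl | rfl | rfl | rfl | rfl | rfl | rfl
    exacts [⟨0, rfl⟩, ⟨1, rfl⟩, ⟨2, rfl⟩, ⟨3, rfl⟩, ⟨4, rfl⟩, ⟨5, rfl⟩, ⟨6, rfl⟩]
  · intro l
    fin_cases l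
    exacts [⟨AB, hAB, by simp [ptsTwo, *]⟩, ⟨AC, hAC, by simp [ptsTwo, *]⟩,
      ⟨AD, hAD, by simp [ptsTwo, *]⟩, ⟨BC, hBC, by simp [ptsTwo, *]⟩,
      ⟨BD, hBD, by simp [ptsTwo, *]⟩, ⟨CD, hCD, by simp [ptsTwo, *]⟩,
      ⟨EF, hEF, by simp [ptsTwo, *]⟩]

set_option maxHeartbeats 1000000 in
theorem hasModel_ptsThree (h : IsPG2_3 A) : HasModel A ptsThree := by
  obtain ⟨⟨hmeet, -⟩, h4, huniv⟩ := h
  intro a b c d hF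
  obtain ⟨AB, hAB, aAB, bAB⟩ := A.exists_line a b hF.ab
  obtain ⟨AC, hAC, aAC, cAC⟩ := A.exists_line a c hF.ac
  obtain ⟨AD, hAD, aAD, dAD⟩ := A.exists_line a d hF.ad
  obtain ⟨BC, hBC, bBC, cBC⟩ := A.exists_line b c hF.bc
  obtain ⟨BD, hBD, bBD, dBD⟩ := A.exists_line b d hF.bd
  obtain ⟨CD, hCD, cCD, dCD⟩ := A.exists_line c d hF.cd
  have cAB : c ∉ AB := fun h => hF.abc ⟨AB, hAB, aAB, bAB, h⟩
  have dAB : d ∉ AB := fun h => hF.abd ⟨AB, hAB, aAB, bAB, h⟩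
  have bAC : b ∉ AC := fun h => hF.abc ⟨AC, hAC, aAC, h, cAC⟩
  have dAC : d ∉ AC := fun h => hF.acd ⟨AC, hAC, aAC, cAC, h⟩
  have bAD : b ∉ AD := fun h => hF.abd ⟨AD, hAD, aAD, h, dAD⟩
  have cAD : c ∉ AD := fun h => hF.acd ⟨AD, hAD, aAD, h, dAD⟩
  have aBC : a ∉ BC := fun h => hF.abc ⟨BC, hBC, h, bBC, cBC⟩
  have dBC : d ∉ BC := fun h => hF.bcd ⟨BC, hBC, bBC, cBC, h⟩
  have aBD : a ∉ BD := fun h => hF.abd ⟨BD, hBD, h, bBD, dBD⟩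
  have cBD : c ∉ BD := fun h => hF.bcd ⟨BD, hBD, bBD, h, dBD⟩
  have aCD : a ∉ CD := fun h => hF.acd ⟨CD, hCD, h, cCD, dCD⟩
  have bCD : b ∉ CD := fun h => hF.bcd ⟨CD, hCD, h, cCD, dCD⟩
  obtain ⟨e, eAB, eCD⟩ := hmeet AB hAB CD hCD
  obtain ⟨f, fAC, fBD⟩ := hmeet AC hAC BD hBD
  obtain ⟨g, gAD, gBC⟩ := hmeet AD hAD BC hBC
  have hea : e ≠ a := fun h => aCD (h ▸ eCD)
  have heb : e ≠ b := fun h => bCD (h ▸ eCD)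
  have hec : e ≠ c := fun h => cAB (h ▸ eAB)
  have hed : e ≠ d := fun h => dAB (h ▸ eAB)
  have hfa : f ≠ a := fun h => aBD (h ▸ fBD)
  have hfc : f ≠ c := fun h => cBD (h ▸ fBD)
  have hfb : f ≠ b := fun h => bAC (h ▸ fAC)
  have hfd : f ≠ d := fun h => dAC (h ▸ fAC)
  have hga : g ≠ a := fun h => aBC (h ▸ gBC)
  have hgd : g ≠ d := fun h => dBC (h ▸ gBC)
  have hgb : g ≠ b := fun h => bAD (h ▸ gAD)
  have hgc : g ≠ c := fun h => cAD (h ▸ gAD)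
  obtain ⟨p, pAB, hpa, hpb, hpe, sAB⟩ := exists_fourth (h4 AB hAB) aAB bAB eAB hF.ab hea heb
  obtain ⟨q, qAC, hqa, hqc, hqf, sAC⟩ := exists_fourth (h4 AC hAC) aAC cAC fAC hF.ac hfa hfc
  obtain ⟨r, rAD, hra, hrd, hrg, sAD⟩ := exists_fourth (h4 AD hAD) aAD dAD gAD hF.ad hga hgd
  obtain ⟨u, uBC, hub, huc, hug, sBC⟩ := exists_fourth (h4 BC hBC) bBC cBC gBC hF.bc hgb hgc
  obtain ⟨v, vBD, hvb, hvd, hvf, sBD⟩ := exists_fourth (h4 BD hBD) bBD dBD fBD hF.bd hfb hfd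
  obtain ⟨w, wCD, hwc, hwd, hwe, sCD⟩ := exists_fourth (h4 CD hCD) cCD dCD eCD hF.cd hec hed
  have join : ∀ {a u v w}, a ≠ u → (∃ L ∈ A.lines, a ∈ L ∧ u ∈ L ∧ v ∈ L) →
      (∃ L ∈ A.lines, a ∈ L ∧ u ∈ L ∧ w ∈ L) → ∃ L ∈ A.lines, a ∈ L ∧ u ∈ L ∧ v ∈ L ∧ w ∈ L := by
    rintro a u v w hau ⟨L, hL, h1, h2, h3⟩ ⟨M, hM, h4, h5, h6⟩
    obtain rfl := line_unique hau hL hM h1 h2 h4 h5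
    exact ⟨L, hL, h1, h2, h3, h6⟩
  obtain ⟨TA, hTA, aTA, uTA, vTA, wTA⟩ := join (by rintro rfl; exact aBC uBC)
    (tangent (v := v) hmeet hAB hAC hAD hBC hBD aAB bAB aAC cAC aAD dAD bBC cBC bBD dBD
      aBC aBD gAD gBC fAC fBD uBC hub huc hug sBD)
    (tangent (v := w) hmeet hAC hAB hAD hBC hCD aAC cAC aAB bAB aAD dAD cBC bBC cCD dCD
      aBC aCD gAD gBC eAB eCD uBC huc hub hug sCD)
  obtain ⟨TB, hTB, bTB, qTB, rTB, wTB⟩ := join (by rintro rfl; exact bAC qAC)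
    (tangent (v := r) hmeet hAB hBC hBD hAC hAD bAB aAB bBC cBC bBD dBD aAC cAC aAD dAD
      bAC bAD fBD fAC gBC gAD qAC hqa hqc hqf sAD)
    (tangent (v := w) hmeet hBC hAB hBD hAC hCD bBC cBC bAB aAB bBD dBD cAC aAC cCD dCD
      bAC bCD fBD fAC eAB eCD qAC hqc hqa hqf sCD)
  obtain ⟨TC, hTC, cTC, pTC, rTC, vTC⟩ := join (by rintro rfl; exact cAB pAB)
    (tangent (v := r) hmeet hAC hBC hCD hAB hAD cAC aAC cBC bBC cCD dCD aAB bAB aAD dAD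
      cAB cAD eCD eAB gBC gAD pAB hpa hpb hpe sAD)
    (tangent (v := v) hmeet hBC hAC hCD hAB hBD cBC bBC cAC aAC cCD dCD bAB aAB bBD dBD
      cAB cBD eCD eAB fAC fBD pAB hpb hpa hpe sBD)
  obtain ⟨TD, hTD, dTD, pTD, qTD, uTD⟩ := join (by rintro rfl; exact dAB pAB)
    (tangent (v := q) hmeet hAD hBD hCD hAB hAC dAD aAD dBD bBD dCD cCD aAB bAB aAC cAC
      dAB dAC eCD eAB fBD fAC pAB hpa hpb hpe sAC)
    (tangent (v := u) hmeet hBD hAD hCD hAB hBC dBD bBD dAD aAD dCD cCD bAB aAB bBC cBC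
      dAB dBC eCD eAB gAD gBC pAB hpb hpa hpe sBC)
  have huv : u ≠ v := fun h => hub
    (eq_of_mem hBC hBD (fun h => dBC (h ▸ dBD)) uBC (h ▸ vBD) bBC bBD)
  have huw : u ≠ w := fun h => huc
    (eq_of_mem hBC hCD (fun h => dBC (h ▸ dCD)) uBC (h ▸ wCD) cBC cCD)
  have hvw : v ≠ w := fun h => hvd
    (eq_of_mem hBD hCD (fun h => cBD (h ▸ cCD)) vBD (h ▸ wCD) dBD dCD)
  have hua : u ≠ a := fun h => aBC (h ▸ uBC)
  have hva : v ≠ a := fun h => aBD (h ▸ vBD)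
  have hwa : w ≠ a := fun h => aCD (h ▸ wCD)
  have sTA : ∀ y ∈ TA, y = a ∨ y = u ∨ y = v ∨ y = w := by
    obtain ⟨w', -, -, -, -, hw'⟩ := exists_fourth (h4 TA hTA) aTA uTA vTA hua.symm hva huv.symm
    have := hw' w wTA
    grind
  have hall : ∀ y, y = a ∨ y = b ∨ y = c ∨ y = d ∨ y = e ∨ y = f ∨ y = g ∨ y = p ∨ y = q ∨ y = r ∨
      y = u ∨ y = v ∨ y = w := by
    intro y
    by_cases hya : y = a
    · exact .inl hya
    obtain ⟨N, hN, yN, aN⟩ := A.exists_line y a hya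
    obtain ⟨z, zN, hz⟩ := hmeet N hN BC hBC
    rcases sBC z hz with rfl | rfl | rfl | rfl
    · obtain rfl : N = AB := line_unique hF.ab hN hAB aN zN aAB bAB
      have := sAB y yN; tauto
    · obtain rfl : N = AC := line_unique hF.ac hN hAC aN zN aAC cAC
      have := sAC y yN; tauto
    · obtain rfl : N = AD := line_unique hga hN hAD zN aN gAD aAD
      have := sAD y yN; tauto
    · obtain rfl : N = TA := line_unique hua hN hTA zN aN uTA aTA
      have := sTA y yN; tauto
  have hef : e ≠ f := fun h => hea
    (eq_of_mem hAB hAC (fun h => bAC (h ▸ bAB)) eAB (h ▸ fAC) aAB aAC)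
  have heg : e ≠ g := fun h => hea
    (eq_of_mem hAB hAD (fun h => bAD (h ▸ bAB)) eAB (h ▸ gAD) aAB aAD)
  have hfg : f ≠ g := fun h => hfa
    (eq_of_mem hAC hAD (fun h => cAD (h ▸ cAC)) fAC (h ▸ gAD) aAC aAD)
  have hefg : ∀ L ∈ A.lines, e ∈ L → f ∈ L → g ∉ L := by
    intro L hL eL fL gL
    obtain ⟨y, yL, hye, hyf, hyg, -⟩ := exists_fourth (h4 L hL) eL fL gL hef heg.symm hfg.symm
    have nL : ∀ S ∈ A.lines, ∀ x ∈ S, x ∈ L → y ∈ S → y ≠ x → S = L := fun S hS x xS xL yS h =>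
      line_unique h hS hL yS xS yL xL
    have hAB' : AB ≠ L := fun h => (eq_or_line_eq hAC hAB a f aAC aAB fAC (h ▸ fL)).elim
      hfa.symm (fun h => cAB (h ▸ cAC))
    have hCD' : CD ≠ L := fun h => (eq_or_line_eq hAC hCD c f cAC cCD fAC (h ▸ fL)).elim
      hfc.symm (fun h => aCD (h ▸ aAC))
    have hAC' : AC ≠ L := fun h => (eq_or_line_eq hAB hAC a e aAB aAC eAB (h ▸ eL)).elim
      hea.symm (fun h => bAC (h ▸ bAB))
    have hBD' : BD ≠ L := fun h => (eq_or_line_eq hAB hBD b e bAB bBD eAB (h ▸ eL)).elim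
      heb.symm (fun h => aBD (h ▸ aAB))
    have hAD' : AD ≠ L := fun h => (eq_or_line_eq hAB hAD a e aAB aAD eAB (h ▸ eL)).elim
      hea.symm (fun h => bAD (h ▸ bAB))
    have hBC' : BC ≠ L := fun h => (eq_or_line_eq hAB hBC b e bAB bBC eAB (h ▸ eL)).elim
      heb.symm (fun h => aBC (h ▸ aAB))
    have i1 : y ∉ AB := fun h => hAB' (nL _ hAB e eAB eL h hye)
    have i2 : y ∉ CD := fun h => hCD' (nL _ hCD e eCD eL h hye)
    have i3 : y ∉ AC := fun h => hAC' (nL _ hAC f fAC fL h hyf)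
    have i4 : y ∉ BD := fun h => hBD' (nL _ hBD f fBD fL h hyf)
    have i5 : y ∉ AD := fun h => hAD' (nL _ hAD g gAD gL h hyg)
    have i6 : y ∉ BC := fun h => hBC' (nL _ hBC g gBC gL h hyg)
    rcases hall y with rfl | rfl | rfl | rfl | rfl | rfl | rfl | rfl | rfl | rfl | rfl | rfl | rfl
    exacts [i1 aAB, i1 bAB, i2 cCD, i2 dCD, i1 eAB, i3 fAC, i5 gAD, i1 pAB, i3 qAC, i5 rAD, i6 uBC,
      i4 vBD, i2 wCD]
  obtain ⟨EF, hEF, eEF, fEF⟩ := A.exists_line e f hef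
  obtain ⟨EG, hEG, eEG, gEG⟩ := A.exists_line e g heg
  obtain ⟨FG, hFG, fFG, gFG⟩ := A.exists_line f g hfg
  have gEF : g ∉ EF := hefg EF hEF eEF fEF
  have fEG : f ∉ EG := fun h => hefg EG hEG eEG h gEG
  have eFG : e ∉ FG := fun h => hefg FG hFG h fFG gFG
  have uEF : u ∈ EF := diagonal hmeet hAB hAC hBC hBD hCD hEF aAB bAB aAC cAC bBD dBD cCD dCD
    aBD dAB cAB aCD cBD eAB eCD fAC fBD eEF fEF gEF sBC
  have rEF : r ∈ EF := by
    refine diagonal hmeet hAB hBD hAD hAC hCD hEF bAB aAB bBD dBD aAC cAC dCD cCD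
      bAC cAB dAB bCD dAC eAB eCD fBD fAC eEF fEF gEF sAD
  have qEG : q ∈ EG := by
    refine diagonal hmeet hAB hBC hAC hAD hCD hEG bAB aAB bBC cBC aAD dAD cCD dCD
      bAD dAB cAB bCD cAD eAB eCD gBC gAD eEG gEG fEG sAC
  have vEG : v ∈ EG := by
    refine diagonal hmeet hAB hAD hBD hBC hCD hEG aAB bAB aAD dAD bBC cBC dCD cCD
      aBC cAB dAB aCD dBC eAB eCD gAD gBC eEG gEG fEG sBD
  have pFG : p ∈ FG := by
    refine diagonal hmeet hAC hBC hAB hAD hBD hFG cAC aAC cBC bBC aAD dAD bBD dBD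
      cAD dAC bAC cBD bAD fAC fBD gBC gAD fFG gFG eFG sAB
  have wFG : w ∈ FG := by
    refine diagonal hmeet hAC hAD hCD hBC hBD hFG aAC cAC aAD dAD cBC bBC dBD bBD
      aBC bAC dAC aBD dBC fAC fBD gAD gBC fFG gFG eFG sCD
  refine ⟨![a, b, c, d, e, f, g, p, q, r, u, v, w], ?_⟩
  rw [← and_assoc]
  refine ⟨collin_iff_of_model (k := 4) h4 huniv ?_ (by decide) (by decide) ?_, rfl, rfl, rfl, rfl⟩
  · intro y
    rcases hall y with rfl | rfl | rfl | rfl | rfl | rfl | rfl | rfl | rfl | rfl | rfl | rfl | rfl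
    exacts [⟨0, rfl⟩, ⟨1, rfl⟩, ⟨2, rfl⟩, ⟨3, rfl⟩, ⟨4, rfl⟩, ⟨5, rfl⟩, ⟨6, rfl⟩, ⟨7, rfl⟩,
      ⟨8, rfl⟩, ⟨9, rfl⟩, ⟨10, rfl⟩, ⟨11, rfl⟩, ⟨12, rfl⟩]
  · intro l
    fin_cases l
    exacts [⟨AB, hAB, by simp [ptsThree, aAB, bAB, eAB, pAB]⟩,
      ⟨AC, hAC, by simp [ptsThree, aAC, cAC, fAC, qAC]⟩,
      ⟨AD, hAD, by simp [ptsThree, aAD, dAD, gAD, rAD]⟩,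
      ⟨BC, hBC, by simp [ptsThree, bBC, cBC, gBC, uBC]⟩,
      ⟨BD, hBD, by simp [ptsThree, bBD, dBD, fBD, vBD]⟩,
      ⟨CD, hCD, by simp [ptsThree, cCD, dCD, eCD, wCD]⟩,
      ⟨TA, hTA, by simp [ptsThree, aTA, uTA, vTA, wTA]⟩,
      ⟨TB, hTB, by simp [ptsThree, bTB, qTB, rTB, wTB]⟩,
      ⟨TC, hTC, by simp [ptsThree, cTC, pTC, rTC, vTC]⟩,
      ⟨TD, hTD, by simp [ptsThree, dTD, pTD, qTD, uTD]⟩,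
      ⟨EF, hEF, by simp [ptsThree, eEF, fEF, rEF, uEF]⟩,
      ⟨EG, hEG, by simp [ptsThree, eEG, gEG, qEG, vEG]⟩,
      ⟨FG, hFG, by simp [ptsThree, fFG, gFG, pFG, wFG]⟩]

/-! ### Homogeneity of the planes of order two and three -/

theorem isFrame_of_two_lines {L M : Set X} (hL : L ∈ A.lines) (hM : M ∈ A.lines) {a b c d : X}
    (ha : a ∈ L \ M) (hb : b ∈ L \ M) (hc : c ∈ M \ L) (hd : d ∈ M \ L) (hab : a ≠ b)
    (hcd : c ≠ d) : IsFrame A a b c d where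
  ab := hab
  ac h := hc.2 (h ▸ ha.1)
  ad h := hd.2 (h ▸ ha.1)
  bc h := hc.2 (h ▸ hb.1)
  bd h := hd.2 (h ▸ hb.1)
  cd := hcd
  abc h := hc.2 (mem_of_collin hab hL ha.1 hb.1 h)
  abd h := hd.2 (mem_of_collin hab hL ha.1 hb.1 h)
  acd h := ha.2 (mem_of_collin hcd hM hc.1 hd.1 h.swap₁₂.swap₂₃)
  bcd h := hb.2 (mem_of_collin hcd hM hc.1 hd.1 h.swap₁₂.swap₂₃)

theorem HasModel.exists_auto {N : ℕ} [NeZero N] {pts : Fin N → Finset (Fin N)}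
    (hA : HasModel A pts) {a b c d a' b' c' d' : X} (h : IsFrame A a b c d)
    (h' : IsFrame A a' b' c' d') :
    ∃ g, IsAuto A g ∧ g a = a' ∧ g b = b' ∧ g c = c' ∧ g d = d' := by
  obtain ⟨φ, hφ, hcol, rfl, rfl, rfl, rfl⟩ := hA a b c d h
  obtain ⟨ψ, hψ, hcol', rfl, rfl, rfl, rfl⟩ := hA a' b' c' d' h'
  let e := Equiv.ofBijective φ hφ
  have he : ∀ i, e.symm (φ i) = i := e.symm_apply_apply
  refine ⟨ψ ∘ e.symm, ⟨hψ.comp e.symm.bijective, fun x y z => ?_⟩, by simp [he], by simp [he],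
    by simp [he], by simp [he]⟩
  obtain ⟨i, rfl⟩ := hφ.2 x
  obtain ⟨j, rfl⟩ := hφ.2 y
  obtain ⟨m, rfl⟩ := hφ.2 z
  simp only [Function.comp_apply, he, hcol, hcol']

/-- The points of the model are determined by the sides of the quadrangle through them. -/
def Separates {N : ℕ} [NeZero N] (pts : Fin N → Finset (Fin N)) : Prop :=
  ∀ i j : Fin N, (∀ p ∈ ({0, 1, 2, 3} : Finset (Fin N)), ∀ q ∈ ({0, 1, 2, 3} : Finset (Fin N)),
    p ≠ q → ((∃ l, i ∈ pts l ∧ p ∈ pts l ∧ q ∈ pts l) ↔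
      ∃ l, j ∈ pts l ∧ p ∈ pts l ∧ q ∈ pts l)) → i = j

theorem separates_ptsTwo : Separates ptsTwo := by
  unfold Separates; decide

set_option maxRecDepth 10000 in
theorem separates_ptsThree : Separates ptsThree := by
  unfold Separates; decide

theorem HasModel.exists_auto_of_frame_subset {N : ℕ} [NeZero N] {pts : Fin N → Finset (Fin N)}
    (hA : HasModel A pts) (hsep : Separates pts) {S : Set X} {f : X → X} (hf : Set.InjOn f S)
    (hcol : ∀ x ∈ S, ∀ y ∈ S, ∀ z ∈ S, (Collin A x y z ↔ Collin A (f x) (f y) (f z)))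
    {a b c d : X} (h : IsFrame A a b c d) (ha : a ∈ S) (hb : b ∈ S) (hc : c ∈ S) (hd : d ∈ S) :
    ∃ g, IsAuto A g ∧ ∀ x ∈ S, g x = f x := by
  have h' : IsFrame A (f a) (f b) (f c) (f d) :=
    ⟨hf.ne ha hb h.ab, hf.ne ha hc h.ac, hf.ne ha hd h.ad, hf.ne hb hc h.bc, hf.ne hb hd h.bd,
      hf.ne hc hd h.cd, (hcol a ha b hb c hc).not.1 h.abc, (hcol a ha b hb d hd).not.1 h.abd,
      (hcol a ha c hc d hd).not.1 h.acd, (hcol b hb c hc d hd).not.1 h.bcd⟩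
  obtain ⟨g, hg, ga, gb, gc, gd⟩ := hA.exists_auto h h'
  refine ⟨g, hg, fun x hx => ?_⟩
  obtain ⟨φ, hφ, hφcol, h0, h1, h2, h3⟩ := hA _ _ _ _ h'
  obtain ⟨i, hi⟩ := hφ.2 (g x)
  obtain ⟨j, hj⟩ := hφ.2 (f x)
  rw [← hi, ← hj, hsep i j]
  have key : ∀ p ∈ ({0, 1, 2, 3} : Finset (Fin N)), ∃ y ∈ S, φ p = g y ∧ φ p = f y := by
    intro p hp
    simp only [Finset.mem_insert, Finset.mem_singleton] at hp
    rcases hp with rfl | rfl | rfl | rfl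
    exacts [⟨a, ha, h0.trans ga.symm, h0⟩, ⟨b, hb, h1.trans gb.symm, h1⟩,
      ⟨c, hc, h2.trans gc.symm, h2⟩, ⟨d, hd, h3.trans gd.symm, h3⟩]
  intro p hp q hq _
  obtain ⟨y, hy, hy1, hy2⟩ := key p hp
  obtain ⟨z, hz, hz1, hz2⟩ := key q hq
  rw [← hφcol, ← hφcol, hi, hj]
  conv_lhs => rw [hy1, hz1]
  conv_rhs => rw [hy2, hz2]
  rw [← hg.2, hcol x hx y hy z hz]

theorem exists_frame_or_subset [Nontrivial X] (hex : ∀ L ∈ A.lines, ∃ p, p ∉ L) (S : Set X) :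
    (∃ a ∈ S, ∃ b ∈ S, ∃ c ∈ S, ∃ d ∈ S, IsFrame A a b c d) ∨
      ∃ L ∈ A.lines, ∃ c, c ∉ L ∧ S ⊆ insert c L := by
  have hline : ∀ L ∈ A.lines, S ⊆ L → ∃ L ∈ A.lines, ∃ c, c ∉ L ∧ S ⊆ insert c L := by
    intro L hL hS
    obtain ⟨c, hc⟩ := hex L hL
    exact ⟨L, hL, c, hc, hS.trans (Set.subset_insert _ _)⟩
  by_cases hcol : ∀ x ∈ S, ∀ y ∈ S, ∀ z ∈ S, Collin A x y z
  · right
    by_cases hS : S.Subsingleton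
    · obtain ⟨x, hx⟩ : ∃ x, S ⊆ {x} := by
        rcases hS.eq_empty_or_singleton with h | ⟨x, h⟩
        · exact ⟨Classical.arbitrary X, by simp [h]⟩
        · exact ⟨x, h.subset⟩
      obtain ⟨y, hy⟩ := exists_ne x
      obtain ⟨L, hL, -, hxL⟩ := A.exists_line y x hy
      exact hline L hL (hx.trans (Set.singleton_subset_iff.2 hxL))
    · obtain ⟨x, hx, y, hy, hxy⟩ := Set.not_subsingleton_iff.1 hS
      obtain ⟨L, hL, hxL, hyL⟩ := A.exists_line x y hxy
      exact hline L hL fun z hz => mem_of_collin hxy hL hxL hyL (hcol x hx y hy z hz)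
  push Not at hcol
  obtain ⟨a, ha, b, hb, c, hc, habc⟩ := hcol
  have hab : a ≠ b := fun h => habc (collin_of_eq (.inl h))
  have hbc : b ≠ c := fun h => habc (collin_of_eq (.inr (.inl h)))
  have hac : a ≠ c := fun h => habc (collin_of_eq (.inr (.inr h)))
  obtain ⟨AB, hAB, aAB, bAB⟩ := A.exists_line a b hab
  obtain ⟨AC, hAC, aAC, cAC⟩ := A.exists_line a c hac
  obtain ⟨BC, hBC, bBC, cBC⟩ := A.exists_line b c hbc
  have cAB : c ∉ AB := fun h => habc ⟨AB, hAB, aAB, bAB, h⟩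
  have bAC : b ∉ AC := fun h => habc ⟨AC, hAC, aAC, h, cAC⟩
  have aBC : a ∉ BC := fun h => habc ⟨BC, hBC, h, bBC, cBC⟩
  by_contra! hcon
  obtain ⟨hframe, hsub⟩ := hcon
  have hcover : ∀ x ∈ S, x ∈ AB ∨ x ∈ AC ∨ x ∈ BC := by
    intro x hx
    by_contra! h
    exact hframe a ha b hb c hc x hx ⟨hab, hac, fun e => h.1 (e ▸ aAB), hbc,
      fun e => h.1 (e ▸ bAB), fun e => h.2.1 (e ▸ cAC), habc,
      fun e => h.1 (mem_of_collin hab hAB aAB bAB e),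
      fun e => h.2.1 (mem_of_collin hac hAC aAC cAC e),
      fun e => h.2.2 (mem_of_collin hbc hBC bBC cBC e)⟩
  obtain ⟨s, hs, hs'⟩ := Set.not_subset.1 (hsub AB hAB c cAB)
  obtain ⟨t, ht, ht'⟩ := Set.not_subset.1 (hsub AC hAC b bAC)
  obtain ⟨r, hr, hr'⟩ := Set.not_subset.1 (hsub BC hBC a aBC)
  simp only [Set.mem_insert_iff, not_or] at hs' ht' hr'
  have hsides : ∀ {L M x y z w}, L ∈ A.lines → M ∈ A.lines → x ∈ S → y ∈ S → z ∈ S → w ∈ S →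
      x ∈ L → x ∉ M → y ∈ L → y ∉ M → z ∈ M → z ∉ L → w ∈ M → w ∉ L → y ≠ x → w ≠ z → False :=
    fun hL hM hx hy hz hw h1 h2 h3 h4 h5 h6 h7 h8 h9 h10 =>
      hframe _ hx _ hy _ hz _ hw (isFrame_of_two_lines hL hM ⟨h1, h2⟩ ⟨h3, h4⟩ ⟨h5, h6⟩ ⟨h7, h8⟩
        h9.symm h10.symm)
  have off : ∀ {L M x y}, L ∈ A.lines → M ∈ A.lines → x ∈ L → x ∈ M → (∃ z ∈ M, z ∉ L) →
      y ∈ L → y ≠ x → y ∉ M := by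
    rintro L M x y hL hM hx hx' ⟨z, hz, hz'⟩ hy hyx hy'
    exact hyx (eq_of_mem hL hM (by rintro rfl; exact hz' hz) hy hy' hx hx')
  rcases hcover s hs with h | h | h
  · exact hs'.2 h
  · rcases hcover t ht with h' | h' | h'
    · exact hsides hAB hAC hb ht hc hs bAB bAC h' ht'.2 cAC cAB h hs'.2 ht'.1 hs'.1
    · exact ht'.2 h'
    · exact hsides hAC hBC ha hs hb ht aAC aBC h
        (off hAC hBC cAC cBC ⟨b, bBC, bAC⟩ h hs'.1) bBC bAC h' ht'.2
        (by rintro rfl; exact hs'.2 aAB) ht'.1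
  · rcases hcover t ht with h' | h' | h'
    · exact hsides hAB hBC ha ht hc hs aAB aBC h'
        (off hAB hBC bAB bBC ⟨c, cBC, cAB⟩ h' ht'.1) cBC cAB h hs'.2
        (by rintro rfl; exact ht'.2 aAC) hs'.1
    · exact ht'.2 h'
    · rcases hcover r hr with h'' | h'' | h''
      · exact hsides hAB hBC ha hr hc hs aAB aBC h'' hr'.2 cBC cAB h hs'.2 hr'.1 hs'.1
      · exact hsides hAC hBC ha hr hb ht aAC aBC h'' hr'.2 bBC bAC h' ht'.2 hr'.1 ht'.1
      · exact hr'.2 h''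

theorem exists_third_mem {L : Set X} (hL : 3 ≤ L.encard) (x y : X) : ∃ z ∈ L, z ≠ x ∧ z ≠ y := by
  by_contra! h
  have hsub : L ⊆ {x, y} := fun z hz => by
    by_cases hzx : z = x
    · exact .inl hzx
    · exact .inr (h z hz hzx)
  have := hL.trans ((Set.encard_le_encard hsub).trans (Set.encard_insert_le {y} x))
  rw [Set.encard_singleton] at this
  exact absurd this (by decide)

theorem HasModel.exists_auto_of_bijOn {N : ℕ} [NeZero N] {pts : Fin N → Finset (Fin N)}
    (hA : HasModel A pts) (h3 : ∀ L ∈ A.lines, 3 ≤ L.encard) (h4 : ∀ L ∈ A.lines, L.encard ≤ 4)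
    {L L' : Set X} (hL : L ∈ A.lines) (hL' : L' ∈ A.lines) {c c' : X} (hc : c ∉ L) (hc' : c' ∉ L')
    {f : X → X} (hf : Set.BijOn f L L') : ∃ g, IsAuto A g ∧ g c = c' ∧ ∀ x ∈ L, g x = f x := by
  obtain ⟨e, a, hea, he, ha⟩ := exists_pair hL
  obtain ⟨b, hb, hbe, hba⟩ := exists_third_mem (h3 L hL) e a
  have frame : ∀ {L c e a b}, L ∈ A.lines → c ∉ L → e ∈ L → a ∈ L → b ∈ L → e ≠ a → b ≠ e →
      b ≠ a → ∃ M ∈ A.lines, M ≠ L ∧ ∃ d ∈ M, c ∈ M ∧ e ∈ M ∧ c ≠ d ∧ IsFrame A a b c d := by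
    intro L c e a b hL hc he ha hb hea hbe hba
    obtain ⟨M, hM, hcM, heM⟩ := A.exists_line c e (by rintro rfl; exact hc he)
    obtain ⟨d, hd, hdc, hde⟩ := exists_third_mem (h3 M hM) c e
    have hML : M ≠ L := by rintro rfl; exact hc hcM
    exact ⟨M, hM, hML, d, hd, hcM, heM, hdc.symm, isFrame_of_two_lines hL hM
      ⟨ha, fun h => hea (eq_of_mem hM hL hML heM he h ha)⟩
      ⟨hb, fun h => hbe (eq_of_mem hM hL hML h hb heM he)⟩ ⟨hcM, hc⟩
      ⟨hd, fun h => hde (eq_of_mem hM hL hML hd h heM he)⟩ hba.symm hdc.symm⟩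
  obtain ⟨M, hM, hML, d, hd, hcM, heM, hcd, hF⟩ := frame hL hc he ha hb hea hbe hba
  obtain ⟨M', hM', hML', d', hd', hcM', heM', hcd', hF'⟩ := frame hL' hc' (hf.mapsTo he)
    (hf.mapsTo ha) (hf.mapsTo hb) (hf.injOn.ne he ha hea) (hf.injOn.ne hb he hbe)
    (hf.injOn.ne hb ha hba)
  obtain ⟨g, hg, ga, gb, gc, gd⟩ := hA.exists_auto hF hF'
  have hgL : ∀ x ∈ L, g x ∈ L' := fun x hx => mem_of_collin hF'.ab hL' (hf.mapsTo ha)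
    (hf.mapsTo hb) (ga ▸ gb ▸ (hg.2 a b x).1 ⟨L, hL, ha, hb, hx⟩)
  have ge : g e = f e := eq_of_mem hM' hL' hML' (mem_of_collin hcd' hM' hcM' hd'
    (gc ▸ gd ▸ (hg.2 c d e).1 ⟨M, hM, hcM, hd, heM⟩)) (hgL e he) heM' (hf.mapsTo he)
  refine ⟨g, hg, gc, fun x hx => ?_⟩
  by_cases hxe : x = e
  · rw [hxe, ge]
  by_cases hxa : x = a
  · rw [hxa, ga]
  by_cases hxb : x = b
  · rw [hxb, gb]
  obtain ⟨y, hy, hyx⟩ := hf.surjOn (hgL x hx)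
  have hcover : y = x ∨ y = e ∨ y = a ∨ y = b := by
    by_contra! h
    have hsub : ({y, x, e, a, b} : Set X) ⊆ L := by
      rintro z (rfl | rfl | rfl | rfl | rfl) <;> assumption
    have := (Set.encard_le_encard hsub).trans (h4 L hL)
    rw [Set.encard_insert_of_notMem (by simp [h]), Set.encard_insert_of_notMem (by simp [*]),
      Set.encard_insert_of_notMem (by simp [hea, hbe.symm]), Set.encard_pair hba.symm] at this
    exact absurd this (by decide)
  rcases hcover with rfl | rfl | rfl | rfl
  · exact hyx.symm
  · exact absurd (hg.1.1 (ge.trans hyx)).symm hxe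
  · exact absurd (hg.1.1 (ga.trans hyx)).symm hxa
  · exact absurd (hg.1.1 (gb.trans hyx)).symm hxb

theorem exists_bijOn_extends {L L' : Set X} {k : ℕ} (hL : L.encard = k) (hL' : L'.encard = k)
    {T : Set X} {f : X → X} (hT : T ⊆ L) (hfT : Set.MapsTo f T L') (hf : Set.InjOn f T) :
    ∃ h : X → X, Set.BijOn h L L' ∧ ∀ x ∈ T, h x = f x := by
  classical
  have := (Set.finite_of_encard_eq_coe hL).fintype
  have hfin := Set.finite_of_encard_eq_coe hL'
  have hcard : Fintype.card L = hfin.toFinset.card := by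
    have h1 := L.encard_eq_coe_toFinset_card
    have h2 := hfin.encard_eq_coe_toFinset_card
    rw [hL, Nat.cast_inj, Set.toFinset_card] at h1
    rw [hL', Nat.cast_inj] at h2
    rw [← h1, ← h2]
  obtain ⟨g, hg⟩ := Set.MapsTo.exists_equiv_extend_of_card_eq hcard
    (s := {x : L | (x : X) ∈ T}) (f := fun x => f x) (fun x hx => by simpa using hfT hx)
    (fun x hx y hy hxy => Subtype.ext (hf hx hy hxy))
  have key : ∀ x (hx : x ∈ L), Function.extend Subtype.val (fun y : L => (g y : X)) id x =
      g ⟨x, hx⟩ :=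
    fun x hx => Subtype.val_injective.extend_apply _ _ (⟨x, hx⟩ : L)
  refine ⟨Function.extend Subtype.val (fun y : L => (g y : X)) id, ⟨?_, ?_, ?_⟩, ?_⟩
  · intro x hx
    rw [key x hx]
    exact hfin.mem_toFinset.1 (g ⟨x, hx⟩).2
  · intro x hx y hy hxy
    rw [key x hx, key y hy] at hxy
    exact congrArg Subtype.val (g.injective (Subtype.ext hxy))
  · intro y hy
    obtain ⟨x, hx⟩ := g.surjective ⟨y, hfin.mem_toFinset.2 hy⟩
    exact ⟨x, x.2, by rw [key x x.2, Subtype.coe_eta, hx]⟩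
  · intro x hx
    rw [key x (hT hx)]
    exact hg _ hx

theorem exists_image_line [Nontrivial X] (hex : ∀ L ∈ A.lines, ∃ p, p ∉ L) {S L : Set X} {c : X}
    (hL : L ∈ A.lines) (hc : c ∉ L) {f : X → X} (hf : Set.InjOn f S)
    (hcol : ∀ x ∈ S, ∀ y ∈ S, ∀ z ∈ S, (Collin A x y z ↔ Collin A (f x) (f y) (f z))) :
    ∃ L' ∈ A.lines, ∃ c', c' ∉ L' ∧ Set.MapsTo f (S ∩ L) L' ∧ (c ∈ S → f c = c') := by
  by_cases hT : (S ∩ L).Subsingleton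
  · obtain ⟨p, q, hpq, hp, hq⟩ : ∃ p q, p ≠ q ∧ (∀ x ∈ S ∩ L, f x = p) ∧ (c ∈ S → f c = q) := by
      rcases hT.eq_empty_or_singleton with h | ⟨u, h⟩
      · obtain ⟨p, hp⟩ := exists_ne (f c)
        exact ⟨p, f c, hp, by simp [h], fun _ => rfl⟩
      · have hu : u ∈ S ∩ L := h ▸ Set.mem_singleton u
        by_cases hcS : c ∈ S
        · exact ⟨f u, f c, hf.ne hu.1 hcS (by rintro rfl; exact hc hu.2), by simp [h], fun _ => rfl⟩
        · obtain ⟨q, hq⟩ := exists_ne (f u)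
          exact ⟨f u, q, hq.symm, by simp [h], fun h => absurd h hcS⟩
    obtain ⟨M, hM, hpM, hqM⟩ := A.exists_line p q hpq
    obtain ⟨r, hr⟩ := hex M hM
    obtain ⟨L', hL', hpL', hrL'⟩ := A.exists_line p r (by rintro rfl; exact hr hpM)
    exact ⟨L', hL', q, fun h => hr (line_unique hpq hL' hM hpL' h hpM hqM ▸ hrL'),
      fun x hx => hp x hx ▸ hpL', hq⟩
  · obtain ⟨u, hu, v, hv, huv⟩ := Set.not_subsingleton_iff.1 hT
    have hne := hf.ne hu.1 hv.1 huv
    obtain ⟨L', hL', huL', hvL'⟩ := A.exists_line _ _ hne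
    have hmaps : Set.MapsTo f (S ∩ L) L' := fun x hx => mem_of_collin hne hL' huL' hvL'
      ((hcol u hu.1 v hv.1 x hx.1).1 ⟨L, hL, hu.2, hv.2, hx.2⟩)
    by_cases hcS : c ∈ S
    · exact ⟨L', hL', f c, fun h => hc (mem_of_collin huv hL hu.2 hv.2
        ((hcol u hu.1 v hv.1 c hcS).2 ⟨L', hL', huL', hvL', h⟩)), hmaps, fun _ => rfl⟩
    · obtain ⟨c', hc'⟩ := hex L' hL'
      exact ⟨L', hL', c', hc', hmaps, fun h => absurd h hcS⟩

theorem HasModel.homogeneous {N : ℕ} [NeZero N] {pts : Fin N → Finset (Fin N)}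
    (hA : HasModel A pts) (hsep : Separates pts) (hfour : FourIndep A) {k : ℕ} (hk3 : 3 ≤ k)
    (hk4 : k ≤ 4) (hk : ∀ L ∈ A.lines, L.encard = k) : Homogeneous A := by
  have hex := exists_not_mem_of_mem hfour
  have : Nontrivial X := by
    obtain ⟨a, b, -, -, hab, -⟩ := hfour
    exact ⟨a, b, hab⟩
  intro S _ f hf hcol
  rcases exists_frame_or_subset hex S with ⟨a, ha, b, hb, c, hc, d, hd, h⟩ | ⟨L, hL, c, hc, hS⟩
  · exact hA.exists_auto_of_frame_subset hsep hf hcol h ha hb hc hd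
  obtain ⟨L', hL', c', hc', hmaps, hfc⟩ := exists_image_line hex hL hc hf hcol
  obtain ⟨h, hbij, hh⟩ := exists_bijOn_extends (hk L hL) (hk L' hL') Set.inter_subset_right hmaps
    (hf.mono Set.inter_subset_left)
  obtain ⟨g, hg, gc, gL⟩ := hA.exists_auto_of_bijOn
    (fun M hM => by rw [hk M hM]; exact_mod_cast hk3)
    (fun M hM => by rw [hk M hM]; exact_mod_cast hk4) hL hL' hc hc' hbij
  refine ⟨g, hg, fun x hx => ?_⟩
  rcases hS hx with rfl | hxL
  · rw [gc, hfc hx]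
  · rw [gL x hxL, hh x ⟨hx, hxL⟩]

theorem homogeneous_of_isFano (h : IsFano A) : Homogeneous A :=
  (hasModel_ptsTwo h).homogeneous separates_ptsTwo h.1.2 le_rfl (by norm_num) h.2.1

theorem homogeneous_of_isPG2_3 (h : IsPG2_3 A) : Homogeneous A :=
  (hasModel_ptsThree h).homogeneous separates_ptsThree h.1.2 (by norm_num) le_rfl h.2.1

end LinSpace

/-- The homogeneous linear spaces are exactly: the trivial spaces, the single
lines, the Fano plane PG(2,2) and the projective plane PG(2,3). -/
theorem stmt9 {X : Type u} (A : LinSpace X) :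
    Homogeneous A ↔
      ((∀ L ∈ A.lines, L.encard = 2) ∨ (∀ x y z : X, Collin A x y z) ∨
        IsFano A ∨ IsPG2_3 A) := by
  refine ⟨LinSpace.classification_of_homogeneous, ?_⟩
  rintro (h | h | h | h)
  exacts [LinSpace.homogeneous_of_trivial h, LinSpace.homogeneous_of_collin h,
    LinSpace.homogeneous_of_isFano h, LinSpace.homogeneous_of_isPG2_3 h]
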